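/- Let G ⊆ ℝ³ be open and simply connected, f : G → ℝ a positive C² function, and W = W₀ + 𝐖 : G → ℍ(ℝ) a C¹ solution of DW = (Df/f)·W̄, where W̄ = W₀ − 𝐖. Then: (a) div(f·𝐖) = 0 on G; (b) f^{-1}·rot(f·𝐖) + f·grad(f^{-1}·W₀) = 0 on G; and consequently (c) div(f²·grad(f^{-1}W₀)) = 0 and (d) rot(f^{-2}·rot(f·𝐖)) = 0 on G. -/

import Mathlib

open Quaternion

/-- Partial derivatives of real-valued functions on `ℝ³`. -/
noncomputable def rpd1 (F : ℝ × ℝ × ℝ → ℝ) (p : ℝ × ℝ × ℝ) : ℝ :=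
  deriv (fun t => F (t, p.2.1, p.2.2)) p.1

noncomputable def rpd2 (F : ℝ × ℝ × ℝ → ℝ) (p : ℝ × ℝ × ℝ) : ℝ :=
  deriv (fun t => F (p.1, t, p.2.2)) p.2.1

noncomputable def rpd3 (F : ℝ × ℝ × ℝ → ℝ) (p : ℝ × ℝ × ℝ) : ℝ :=
  deriv (fun t => F (p.1, p.2.1, t)) p.2.2

/-- Partial derivatives of quaternion-valued functions on `ℝ³`. -/
noncomputable def hpd1 (F : ℝ × ℝ × ℝ → ℍ[ℝ]) (p : ℝ × ℝ × ℝ) : ℍ[ℝ] :=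
  deriv (fun t => F (t, p.2.1, p.2.2)) p.1

noncomputable def hpd2 (F : ℝ × ℝ × ℝ → ℍ[ℝ]) (p : ℝ × ℝ × ℝ) : ℍ[ℝ] :=
  deriv (fun t => F (p.1, t, p.2.2)) p.2.1

noncomputable def hpd3 (F : ℝ × ℝ × ℝ → ℍ[ℝ]) (p : ℝ × ℝ × ℝ) : ℍ[ℝ] :=
  deriv (fun t => F (p.1, p.2.1, t)) p.2.2

/-- The quaternion imaginary units. -/
def qi : ℍ[ℝ] := ⟨0, 1, 0, 0⟩
def qj : ℍ[ℝ] := ⟨0, 0, 1, 0⟩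
def qk : ℍ[ℝ] := ⟨0, 0, 0, 1⟩

/-- The Moisil–Teodorescu (Dirac) operator `D = i∂_x + j∂_y + k∂_z`. -/
noncomputable def Dr (F : ℝ × ℝ × ℝ → ℍ[ℝ]) (p : ℝ × ℝ × ℝ) : ℍ[ℝ] :=
  qi * hpd1 F p + qj * hpd2 F p + qk * hpd3 F p

/-- Quaternionic conjugation `W̄ = W₀ − 𝐖`. -/
def qconjR (a : ℍ[ℝ]) : ℍ[ℝ] := ⟨a.re, -a.imI, -a.imJ, -a.imK⟩

/-- Divergence of a vector field on `ℝ³` given by components. -/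
noncomputable def vdiv (v₁ v₂ v₃ : ℝ × ℝ × ℝ → ℝ) (p : ℝ × ℝ × ℝ) : ℝ :=
  rpd1 v₁ p + rpd2 v₂ p + rpd3 v₃ p

/-- The three components of the curl of a vector field on `ℝ³`. -/
noncomputable def curl1 (v₁ v₂ v₃ : ℝ × ℝ × ℝ → ℝ) (p : ℝ × ℝ × ℝ) : ℝ :=
  rpd2 v₃ p - rpd3 v₂ p

noncomputable def curl2 (v₁ v₂ v₃ : ℝ × ℝ × ℝ → ℝ) (p : ℝ × ℝ × ℝ) : ℝ :=
  rpd3 v₁ p - rpd1 v₃ p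

noncomputable def curl3 (v₁ v₂ v₃ : ℝ × ℝ × ℝ → ℝ) (p : ℝ × ℝ × ℝ) : ℝ :=
  rpd1 v₂ p - rpd2 v₁ p


section
open MeasureTheory Filter Topology Metric Set
open scoped ContDiff

namespace QV

/-- radial profile -/
lemma exists_P : ∃ P : ℝ → ℝ, ContDiff ℝ ∞ P ∧ (∀ s, 1 ≤ s → 8 * P (4 * s) = P s) ∧
    (∀ s, 0 ≤ s → 0 ≤ 6 * P s + 4 * s * deriv P s) ∧
    (∀ s, 1 ≤ s → 6 * P s + 4 * s * deriv P s = 0) ∧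
    ∃ s, 0 ≤ s ∧ 6 * P s + 4 * s * deriv P s ≠ 0 := by
  set θ : ℝ → ℝ := fun s => Real.smoothTransition (2 * s - 1) with hθ
  have hθc : ContDiff ℝ ∞ θ := Real.smoothTransition.contDiff.comp (by fun_prop)
  have hθm : Monotone θ := fun a b h => Real.smoothTransition.monotone (by linarith)
  have hθ1 : ∀ s, 1 ≤ s → θ s = 1 := fun s hs =>
    Real.smoothTransition.one_of_one_le (by linarith)
  have hθ0 : ∀ s, s ≤ 1 / 2 → θ s = 0 := fun s hs =>
    Real.smoothTransition.zero_of_nonpos (by linarith)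
  have hθd : Differentiable ℝ θ := hθc.differentiable (by simp)
  have hθ' : ∀ s, 1 ≤ s → deriv θ s = 0 := by
    intro s hs
    apply IsLocalMax.deriv_eq_zero
    refine Eventually.of_forall fun y => ?_
    rw [hθ1 s hs]
    exact Real.smoothTransition.le_one _
  set P : ℝ → ℝ := fun s => θ s * s ^ (-(3 / 2) : ℝ) with hP
  have hz : ∀ s, s < 1 / 2 → P =ᶠ[𝓝 s] fun _ => 0 := by
    intro s hs
    filter_upwards [eventually_lt_nhds hs] with y hy
    simp [hP, hθ0 y hy.le]
  have hPd : ∀ s, 0 < s → HasDerivAt P (deriv θ s * s ^ (-(3 / 2) : ℝ) +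
      θ s * (-(3 / 2) * s ^ (-(3 / 2) - 1 : ℝ))) s := by
    intro s hs
    exact (hθd s).hasDerivAt.mul (Real.hasDerivAt_rpow_const (Or.inl hs.ne'))
  have hkey : ∀ s, 0 < s → 6 * P s + 4 * s * deriv P s =
      4 * deriv θ s * (s * s ^ (-(3 / 2) : ℝ)) := by
    intro s hs
    rw [(hPd s hs).deriv, Real.rpow_sub_one hs.ne']
    simp only [hP]
    field_simp
    ring
  have hkey0 : ∀ s, s < 1 / 2 → 6 * P s + 4 * s * deriv P s = 0 := by
    intro s hs
    rw [(hz s hs).deriv_eq, (hz s hs).eq_of_nhds]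
    simp
  have hd0 : ∀ s, 0 ≤ deriv θ s := fun s => hθm.deriv_nonneg
  refine ⟨P, ?_, ?_, ?_, ?_, ?_⟩
  · rw [contDiff_iff_contDiffAt]
    intro s
    by_cases hs : s < 1 / 2
    · exact contDiffAt_const.congr_of_eventuallyEq (hz s hs)
    · have : 0 < s := by linarith
      exact hθc.contDiffAt.mul (Real.contDiffAt_rpow_const_of_ne this.ne')
  · intro s hs
    simp only [hP]
    rw [hθ1 s hs, hθ1 (4 * s) (by linarith), Real.mul_rpow (by norm_num) (by linarith)]
    have : (4 : ℝ) ^ (-(3 / 2) : ℝ) = 1 / 8 := by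
      rw [show (4 : ℝ) = 2 ^ (2 : ℝ) by norm_num, ← Real.rpow_mul (by norm_num)]
      rw [show (2 * -(3 / 2) : ℝ) = -(3 : ℕ) by norm_num, Real.rpow_neg (by norm_num), Real.rpow_natCast]
      norm_num
    rw [this]; ring
  · intro s hs
    rcases hs.eq_or_lt with rfl | hs
    · rw [hkey0 0 (by norm_num)]
    · rw [hkey s hs]
      have := hd0 s
      positivity
  · intro s hs
    rw [hkey s (by linarith), hθ' s hs]; simp
  · obtain ⟨c, hc, hc'⟩ := exists_deriv_eq_slope θ (show (1 / 2 : ℝ) < 1 by norm_num)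
      hθc.continuous.continuousOn hθd.differentiableOn
    have hc0 : 0 < c := by linarith [hc.1]
    refine ⟨c, hc0.le, ?_⟩
    rw [hkey c hc0, hc', hθ1 1 le_rfl, hθ0 _ le_rfl]
    positivity

lemma exists_k : ∃ k r : ℝ → ℝ, ContDiff ℝ ∞ k ∧ ContDiff ℝ ∞ r ∧
    (∀ s, 1 ≤ s → k s = 0) ∧ (∀ s, 1 ≤ s → r s = 0) ∧ (∀ s, 0 ≤ s → 0 ≤ r s) ∧
    (∃ s, 0 ≤ s ∧ r s ≠ 0) ∧
    ∀ s, 6 * deriv k s + 4 * s * deriv (deriv k) s = 8 * r (4 * s) - r s := by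
  obtain ⟨P, hP, h8, hnn, h0, hne⟩ := exists_P
  set p : ℝ → ℝ := fun s => 8 * P (4 * s) - P s with hp
  have hpc : ContDiff ℝ ∞ p := by fun_prop
  set k : ℝ → ℝ := fun s => ∫ t in (1 : ℝ)..s, p t with hk
  have hkd : ∀ s, HasDerivAt k (p s) s := fun s =>
    intervalIntegral.integral_hasDerivAt_right (hpc.continuous.intervalIntegrable _ _)
      hpc.continuous.aestronglyMeasurable.stronglyMeasurableAtFilter hpc.continuous.continuousAt
  have hkd' : deriv k = p := funext fun s => (hkd s).deriv
  have hPd : ContDiff ℝ ∞ (deriv P) := by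
    exact (contDiff_infty_iff_deriv.1 hP).2
  refine ⟨k, fun s => 6 * P s + 4 * s * deriv P s, ?_, by fun_prop, ?_, h0, hnn, hne, ?_⟩
  · rw [contDiff_infty_iff_deriv, hkd']
    exact ⟨fun s => (hkd s).differentiableAt, hpc⟩
  · intro s hs
    simp only [hk]
    rw [intervalIntegral.integral_congr (g := fun _ => 0)]
    · simp
    · intro t ht
      rw [uIcc_of_le hs] at ht
      simp [hp, h8 t ht.1]
  · intro s
    rw [hkd']
    have h1 : HasDerivAt p (8 * (deriv P (4 * s) * 4) - deriv P s) s := by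
      have hPs := fun y => (hP.differentiable (by simp) y).hasDerivAt
      have h4 : HasDerivAt (fun s : ℝ => 4 * s) 4 s := by
        simpa using (hasDerivAt_id s).const_mul (4 : ℝ)
      exact (((hPs (4 * s)).comp s h4).const_mul 8).sub (hPs s)
    rw [h1.deriv]
    simp only [hp]; ring

abbrev E3 := ℝ × ℝ × ℝ

/-- coordinate vectors -/
def ee : Fin 3 → E3 := ![(1, 0, 0), (0, 1, 0), (0, 0, 1)]

/-- coordinate functionals -/
def cc : Fin 3 → E3 → ℝ := ![fun x => x.1, fun x => x.2.1, fun x => x.2.2]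

/-- partial derivative -/
noncomputable def pd (i : Fin 3) (F : E3 → ℝ) (x : E3) : ℝ := fderiv ℝ F x (ee i)

lemma pd_add {i : Fin 3} {F H : E3 → ℝ} {x : E3} (hF : DifferentiableAt ℝ F x)
    (hH : DifferentiableAt ℝ H x) : pd i (fun y => F y + H y) x = pd i F x + pd i H x := by
  simp [pd, fderiv_fun_add hF hH]

lemma pd_mul {i : Fin 3} {F H : E3 → ℝ} {x : E3} (hF : DifferentiableAt ℝ F x)
    (hH : DifferentiableAt ℝ H x) :
    pd i (fun y => F y * H y) x = pd i F x * H x + F x * pd i H x := by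
  simp [pd, fderiv_fun_mul hF hH]; ring

lemma pd_contDiff {i : Fin 3} {F : E3 → ℝ} {n m : ℕ∞ω} (hF : ContDiff ℝ n F) (h : m + 1 ≤ n) :
    ContDiff ℝ m (pd i F) :=
  (hF.fderiv_right h).clm_apply contDiff_const

lemma pd_congr {i : Fin 3} {F H : E3 → ℝ} {x : E3} (h : F =ᶠ[𝓝 x] H) : pd i F x = pd i H x := by
  simp [pd, h.fderiv_eq]

lemma pd_support {i : Fin 3} {F : E3 → ℝ} : tsupport (pd i F) ⊆ tsupport F :=
  tsupport_fderiv_apply_subset ℝ (ee i)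

lemma pd_compact {i : Fin 3} {F : E3 → ℝ} (h : HasCompactSupport F) : HasCompactSupport (pd i F) :=
  h.fderiv_apply (𝕜 := ℝ) (ee i)

lemma pd_symm {i j : Fin 3} {F : E3 → ℝ} {x : E3} (hF : ContDiffAt ℝ 2 F x) :
    pd i (pd j F) x = pd j (pd i F) x := by
  have hs : IsSymmSndFDerivAt ℝ F x := hF.isSymmSndFDerivAt (by simp)
  have hd : DifferentiableAt ℝ (fderiv ℝ F) x :=
    (hF.fderiv_right (m := 1) (by norm_num)).differentiableAt (by norm_num)
  have key : ∀ a b : Fin 3, pd a (pd b F) x = fderiv ℝ (fderiv ℝ F) x (ee a) (ee b) := by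
    intro a b
    have : HasFDerivAt (pd b F)
      ((ContinuousLinearMap.apply ℝ ℝ (ee b)).comp (fderiv ℝ (fderiv ℝ F) x)) x :=
      (ContinuousLinearMap.apply ℝ ℝ (ee b)).hasFDerivAt.comp x hd.hasFDerivAt
    simp [pd] at this ⊢
    rw [HasFDerivAt.fderiv this]; simp
  rw [key, key]
  exact hs _ _

/-- squared euclidean norm -/
def NN (x : E3) : ℝ := x.1 ^ 2 + x.2.1 ^ 2 + x.2.2 ^ 2

lemma NN_contDiff {n : ℕ∞ω} : ContDiff ℝ n NN := by unfold NN; fun_prop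

lemma pd_NN (i : Fin 3) (x : E3) : pd i NN x = 2 * cc i x := by
  have h : HasFDerivAt NN (((2 * x.1) • ContinuousLinearMap.fst ℝ ℝ (ℝ × ℝ)) +
    ((2 * x.2.1) • (ContinuousLinearMap.fst ℝ ℝ ℝ).comp (ContinuousLinearMap.snd ℝ ℝ (ℝ × ℝ))) +
    ((2 * x.2.2) • (ContinuousLinearMap.snd ℝ ℝ ℝ).comp (ContinuousLinearMap.snd ℝ ℝ (ℝ × ℝ)))) x := by
    have h1 : HasFDerivAt (fun x : E3 => x.1) (ContinuousLinearMap.fst ℝ ℝ (ℝ × ℝ)) x := hasFDerivAt_fst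
    have h2 : HasFDerivAt (fun x : E3 => x.2.1) ((ContinuousLinearMap.fst ℝ ℝ ℝ).comp (ContinuousLinearMap.snd ℝ ℝ (ℝ × ℝ))) x :=
      hasFDerivAt_fst.comp x hasFDerivAt_snd
    have h3 : HasFDerivAt (fun x : E3 => x.2.2) ((ContinuousLinearMap.snd ℝ ℝ ℝ).comp (ContinuousLinearMap.snd ℝ ℝ (ℝ × ℝ))) x :=
      hasFDerivAt_snd.comp x hasFDerivAt_snd
    have := ((h1.pow 2).add (h2.pow 2)).add (h3.pow 2)
    refine this.congr_fderiv ?_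
    simp
  rw [pd, h.fderiv]
  fin_cases i <;> simp [ee, cc]

lemma pd_cc (i : Fin 3) (x : E3) : pd i (cc i) x = 1 := by
  fin_cases i
  · have : HasFDerivAt (fun x : E3 => x.1) (ContinuousLinearMap.fst ℝ ℝ (ℝ × ℝ)) x := hasFDerivAt_fst
    simp [pd, cc, ee, this.fderiv]
  · have : HasFDerivAt (fun x : E3 => x.2.1) ((ContinuousLinearMap.fst ℝ ℝ ℝ).comp (ContinuousLinearMap.snd ℝ ℝ (ℝ × ℝ))) x :=
      hasFDerivAt_fst.comp x hasFDerivAt_snd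
    simp [pd, cc, ee, this.fderiv]
  · have : HasFDerivAt (fun x : E3 => x.2.2) ((ContinuousLinearMap.snd ℝ ℝ ℝ).comp (ContinuousLinearMap.snd ℝ ℝ (ℝ × ℝ))) x :=
      hasFDerivAt_snd.comp x hasFDerivAt_snd
    simp [pd, cc, ee, this.fderiv]

lemma cc_contDiff {n : ℕ∞ω} (i : Fin 3) : ContDiff ℝ n (cc i) := by
  fin_cases i
  · exact contDiff_fst
  · exact contDiff_fst.comp contDiff_snd
  · exact contDiff_snd.comp contDiff_snd

lemma pd_radial {i : Fin 3} {k : ℝ → ℝ} (hk : ContDiff ℝ ∞ k) (x : E3) :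
    pd i (fun y => k (NN y)) x = deriv k (NN x) * (2 * cc i x) := by
  have h1 : HasFDerivAt NN (fderiv ℝ NN x) x :=
    (NN_contDiff (n := 1)).differentiable (by simp) x |>.hasFDerivAt
  have h2 := ((hk.differentiable (by simp)) (NN x)).hasDerivAt
  have : HasFDerivAt (fun y => k (NN y)) (deriv k (NN x) • fderiv ℝ NN x) x :=
    h2.comp_hasFDerivAt x h1
  rw [pd, this.fderiv, ← pd_NN]
  simp [pd]

lemma NN_ge {x : E3} (h : 1 < ‖x‖) : 1 ≤ NN x := by
  rw [Prod.norm_def, Prod.norm_def] at h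
  simp only [lt_sup_iff, Real.norm_eq_abs] at h
  unfold NN
  have hs : ∀ a : ℝ, 1 < |a| → 1 ≤ a ^ 2 := fun a ha => by
    rw [← sq_abs]; nlinarith
  rcases h with h | h | h <;> nlinarith [hs _ h, sq_nonneg x.1, sq_nonneg x.2.1, sq_nonneg x.2.2]

lemma exists_kernel : ∃ κ ρ : E3 → ℝ, ContDiff ℝ ∞ κ ∧ ContDiff ℝ ∞ ρ ∧
    (∀ x, 1 < ‖x‖ → κ x = 0) ∧ (∀ x, 1 < ‖x‖ → ρ x = 0) ∧ (0 < ∫ x, ρ x) ∧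
    ∀ x, ∑ j, pd j (pd j κ) x = 8 * ρ ((2 : ℝ) • x) - ρ x := by
  obtain ⟨k, r, hk, hr, hk0, hr0, hrn, ⟨s, hs, hrs⟩, hkr⟩ := exists_k
  have hρc : ContDiff ℝ ∞ (fun y => r (NN y)) := hr.comp NN_contDiff
  have hρ0 : ∀ x, 1 < ‖x‖ → r (NN x) = 0 := fun x hx => hr0 _ (NN_ge hx)
  have hk' : ContDiff ℝ ∞ (deriv k) := (contDiff_infty_iff_deriv.1 hk).2
  refine ⟨fun x => k (NN x), fun x => r (NN x), hk.comp NN_contDiff, hρc,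
    fun x hx => hk0 _ (NN_ge hx), hρ0, ?_, ?_⟩
  · refine hρc.continuous.integral_pos_of_hasCompactSupport_nonneg_nonzero
      (x := ((√s, 0, 0) : E3)) ?_ ?_ ?_
    · refine HasCompactSupport.intro (isCompact_closedBall (0 : E3) 1) fun x hx => hρ0 x ?_
      simpa using hx
    · intro x
      exact hrn _ (by unfold NN; positivity)
    · simpa [NN, Real.sq_sqrt hs] using hrs
  · intro x
    have h1 : ∀ j, pd j (pd j fun x => k (NN x)) x =
        deriv (deriv k) (NN x) * (2 * cc j x) * (2 * cc j x) + deriv k (NN x) * 2 := by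
      intro j
      have : pd j (fun x => k (NN x)) = fun y => deriv k (NN y) * (2 * cc j y) :=
        funext fun y => pd_radial hk y
      rw [this, pd_mul, pd_radial hk', pd_mul, pd_cc]
      · simp [pd]
      · fun_prop
      · exact (cc_contDiff (n := 1) j).differentiable (by simp) x
      · exact (hk'.comp NN_contDiff).differentiable (by simp) x
      · exact ((cc_contDiff (n := 1) j).differentiable (by simp) x).const_mul 2
    have h2 : NN ((2 : ℝ) • x) = 4 * NN x := by
      simp [NN]; ring
    simp only [h1, h2, ← hkr (NN x), Fin.sum_univ_three]
    simp [cc, NN]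
    ring

instance haar2 : (volume : Measure (ℝ × ℝ)).IsAddHaarMeasure :=
  inferInstanceAs ((volume : Measure ℝ).prod (volume : Measure ℝ)).IsAddHaarMeasure

instance haar3 : (volume : Measure E3).IsAddHaarMeasure :=
  inferInstanceAs ((volume : Measure ℝ).prod (volume : Measure (ℝ × ℝ))).IsAddHaarMeasure

/-- convolution against a kernel -/
noncomputable def T0 (η G : E3 → ℝ) (ξ : E3) : ℝ := ∫ z, η z * G (ξ - z)

lemma compact_of {η : E3 → ℝ} (h : ∀ x, 1 < ‖x‖ → η x = 0) : HasCompactSupport η := by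
  refine HasCompactSupport.intro (isCompact_closedBall (0 : E3) 1) fun x hx => h x ?_
  simpa using hx

lemma T0_eq (η G : E3 → ℝ) :
    T0 η G = convolution η G (ContinuousLinearMap.lsmul ℝ ℝ) volume := by
  ext ξ
  simp [T0, convolution]

lemma T0_contDiff {η G : E3 → ℝ} (hη : ContDiff ℝ ∞ η) (h0 : ∀ x, 1 < ‖x‖ → η x = 0)
    (hG : Continuous G) : ContDiff ℝ ∞ (T0 η G) := by
  rw [T0_eq]
  exact (compact_of h0).contDiff_convolution_left (n := ⊤) _ hη hG.locallyIntegrable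

lemma T0_bound {η G : E3 → ℝ} (hη : ContDiff ℝ ∞ η) (h0 : ∀ x, 1 < ‖x‖ → η x = 0)
    {B : ℝ} {ξ : E3} (hB : ∀ z, ‖z‖ ≤ 1 → |G (ξ - z)| ≤ B) :
    |T0 η G ξ| ≤ (∫ z, |η z|) * B := by
  have hc := compact_of h0
  unfold T0
  rw [← integral_mul_const, ← Real.norm_eq_abs]
  refine norm_integral_le_of_norm_le ?_ (Eventually.of_forall fun z => ?_)
  · have : Integrable η := hη.continuous.integrable_of_hasCompactSupport hc
    exact this.abs.mul_const B
  · rw [Real.norm_eq_abs, abs_mul]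
    by_cases hz : ‖z‖ ≤ 1
    · exact mul_le_mul_of_nonneg_left (hB z hz) (abs_nonneg _)
    · rw [h0 z (not_le.1 hz)]; simp

lemma T0_fderiv_bound {η G : E3 → ℝ} (hη : ContDiff ℝ ∞ η) (h0 : ∀ x, 1 < ‖x‖ → η x = 0)
    (hG : Continuous G) {B : ℝ} {ξ : E3} (hB : ∀ z, ‖z‖ ≤ 1 → |G (ξ - z)| ≤ B) :
    ‖fderiv ℝ (T0 η G) ξ‖ ≤ (∫ z, ‖fderiv ℝ η z‖) * B := by
  have hc := compact_of h0
  have h1 := hc.hasFDerivAt_convolution_left (ContinuousLinearMap.lsmul ℝ ℝ)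
    (hη.of_le (by simp)) (hG.locallyIntegrable (μ := volume)) ξ
  rw [T0_eq, h1.fderiv]
  unfold convolution
  rw [← integral_mul_const]
  have hη' : Continuous (fderiv ℝ η) := hη.continuous_fderiv (by simp)
  refine norm_integral_le_of_norm_le ?_ (Eventually.of_forall fun z => ?_)
  · have : Integrable (fderiv ℝ η) := hη'.integrable_of_hasCompactSupport (hc.fderiv ℝ)
    exact this.norm.mul_const B
  · have : (ContinuousLinearMap.precompL E3 (ContinuousLinearMap.lsmul ℝ ℝ)) (fderiv ℝ η z)
        (G (ξ - z)) = G (ξ - z) • fderiv ℝ η z := by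
      ext <;> simp [ContinuousLinearMap.precompL_apply, mul_comm]
    rw [this, norm_smul, Real.norm_eq_abs, mul_comm]
    by_cases hz : ‖z‖ ≤ 1
    · exact mul_le_mul_of_nonneg_left (hB z hz) (norm_nonneg _)
    · have : fderiv ℝ η z = 0 := by
        have : η =ᶠ[𝓝 z] fun _ => 0 := by
          filter_upwards [continuous_norm.continuousAt.eventually (eventually_gt_nhds (not_le.1 hz))] with y hy
          exact h0 y hy
        rw [this.fderiv_eq]; simp
      rw [this]; simp

lemma T0_fderiv_bound' {η G : E3 → ℝ} (hη : ContDiff ℝ ∞ η) (h0 : ∀ x, 1 < ‖x‖ → η x = 0)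
    (hG : Continuous G) {B : ℝ} {ξ : E3} (hB : ∀ z, ‖z‖ ≤ 1 → |G (ξ - z) - G ξ| ≤ B) :
    ‖fderiv ℝ (T0 η G) ξ‖ ≤ (∫ z, ‖fderiv ℝ η z‖) * B := by
  have hc := compact_of h0
  have key := T0_fderiv_bound hη h0 (G := fun y => G y - G ξ) (hG.sub continuous_const) hB
  have : T0 η (fun y => G y - G ξ) = fun y => T0 η G y - ∫ z, η z * G ξ := by
    ext y
    unfold T0
    rw [← integral_sub]
    · simp only [mul_sub]
    · exact (by fun_prop : Continuous fun z => η z * G (y - z)).integrable_of_hasCompactSupport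
        hc.mul_right
    · exact (by fun_prop : Continuous fun z => η z * G ξ).integrable_of_hasCompactSupport
        hc.mul_right
  rwa [this, fderiv_sub_const] at key

/-- rescaled convolution -/
noncomputable def TT (η g : E3 → ℝ) (h : ℝ) (x : E3) : ℝ := h * ∫ z, η z * g (x - h • z)

lemma TT_eq {η g : E3 → ℝ} {h : ℝ} (hh : 0 < h) :
    TT η g h = fun x => h * T0 η (fun y => g (h • y)) (h⁻¹ • x) := by
  ext x
  simp [TT, T0, smul_sub, smul_smul, hh.ne']

lemma TT_contDiff {η g : E3 → ℝ} (hη : ContDiff ℝ ∞ η) (h0 : ∀ x, 1 < ‖x‖ → η x = 0)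
    (hg : Continuous g) {h : ℝ} (hh : 0 < h) : ContDiff ℝ ∞ (TT η g h) := by
  rw [TT_eq hh]
  exact contDiff_const.mul ((T0_contDiff hη h0 (by fun_prop)).comp (by fun_prop))

lemma TT_fderiv {η g : E3 → ℝ} (hη : ContDiff ℝ ∞ η) (h0 : ∀ x, 1 < ‖x‖ → η x = 0)
    (hg : Continuous g) {h : ℝ} (hh : 0 < h) (x : E3) :
    fderiv ℝ (TT η g h) x = fderiv ℝ (T0 η (fun y => g (h • y))) (h⁻¹ • x) := by
  rw [TT_eq hh]
  set T := T0 η (fun y => g (h • y))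
  have hT : ContDiff ℝ ∞ T := T0_contDiff hη h0 (by fun_prop)
  have h1 : HasFDerivAt T (fderiv ℝ T (h⁻¹ • x)) (h⁻¹ • x) :=
    (hT.differentiable (by simp) _).hasFDerivAt
  have h2 : HasFDerivAt (fun x : E3 => h⁻¹ • x) (h⁻¹ • ContinuousLinearMap.id ℝ E3) x :=
    (hasFDerivAt_id x).const_smul h⁻¹
  have h3 : HasFDerivAt (fun x => h * T (h⁻¹ • x))
    (h • (fderiv ℝ T (h⁻¹ • x)).comp (h⁻¹ • ContinuousLinearMap.id ℝ E3)) x :=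
    (h1.comp x h2).const_mul h
  rw [h3.fderiv]
  rw [ContinuousLinearMap.comp_smul, smul_smul, mul_inv_cancel₀ hh.ne', one_smul,
    ContinuousLinearMap.comp_id]

lemma TT_bound {η g : E3 → ℝ} (hη : ContDiff ℝ ∞ η) (h0 : ∀ x, 1 < ‖x‖ → η x = 0)
    {h : ℝ} (hh : 0 < h) {M : ℝ} (hM : ∀ x, |g x| ≤ M) (x : E3) :
    |TT η g h x| ≤ h * ((∫ z, |η z|) * M) := by
  rw [TT_eq hh, abs_mul, abs_of_pos hh]
  exact mul_le_mul_of_nonneg_left (T0_bound hη h0 fun z _ => hM _) hh.le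

lemma TT_fderiv_bound {η g : E3 → ℝ} (hη : ContDiff ℝ ∞ η) (h0 : ∀ x, 1 < ‖x‖ → η x = 0)
    (hg : Continuous g) {h : ℝ} (hh : 0 < h) {M : ℝ} (hM : ∀ x, |g x| ≤ M) (x : E3) :
    ‖fderiv ℝ (TT η g h) x‖ ≤ (∫ z, ‖fderiv ℝ η z‖) * M := by
  rw [TT_fderiv hη h0 hg hh]
  exact T0_fderiv_bound hη h0 (by fun_prop) fun z _ => hM _

lemma TT_fderiv_bound' {η g : E3 → ℝ} (hη : ContDiff ℝ ∞ η) (h0 : ∀ x, 1 < ‖x‖ → η x = 0)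
    (hg : Continuous g) {h : ℝ} (hh : 0 < h) {M : ℝ} (hM0 : 0 ≤ M)
    (hM : ∀ x y, |g x - g y| ≤ M * √‖x - y‖) (x : E3) :
    ‖fderiv ℝ (TT η g h) x‖ ≤ (∫ z, ‖fderiv ℝ η z‖) * (M * √h) := by
  rw [TT_fderiv hη h0 hg hh]
  refine T0_fderiv_bound' hη h0 (by fun_prop) fun z hz => (hM _ _).trans ?_
  refine mul_le_mul_of_nonneg_left (Real.sqrt_le_sqrt ?_) hM0
  rw [← smul_sub, norm_smul, Real.norm_eq_abs, abs_of_pos hh]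
  simp only [sub_sub_cancel_left, norm_neg]
  nlinarith

/-- bounded and Hölder continuous of exponent one half -/
def BH (g : E3 → ℝ) : Prop := Continuous g ∧ ∃ M, 0 ≤ M ∧ (∀ x, |g x| ≤ M) ∧
  ∀ x y, |g x - g y| ≤ M * √‖x - y‖

lemma le_sqrt_mul {a X Y : ℝ} (ha : 0 ≤ a) (h1 : a ≤ X) (h2 : a ≤ Y) : a ≤ √X * √Y := by
  rw [← Real.sqrt_mul (ha.trans h1)]
  apply Real.le_sqrt_of_sq_le
  nlinarith

lemma BH.add {f g : E3 → ℝ} (hf : BH f) (hg : BH g) : BH (fun x => f x + g x) := by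
  obtain ⟨cf, M, hM, h1, h2⟩ := hf
  obtain ⟨cg, N, hN, h3, h4⟩ := hg
  refine ⟨cf.add cg, M + N, by positivity, fun x => ?_, fun x y => ?_⟩
  · exact (abs_add_le _ _).trans (add_le_add (h1 x) (h3 x))
  · calc |f x + g x - (f y + g y)| = |(f x - f y) + (g x - g y)| := by ring_nf
      _ ≤ _ := (abs_add_le _ _).trans (add_le_add (h2 x y) (h4 x y))
      _ = _ := by ring

lemma BH.mul {f g : E3 → ℝ} (hf : BH f) (hg : BH g) : BH (fun x => f x * g x) := by
  obtain ⟨cf, M, hM, h1, h2⟩ := hf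
  obtain ⟨cg, N, hN, h3, h4⟩ := hg
  refine ⟨cf.mul cg, 2 * (M * N), by positivity, fun x => ?_, fun x y => ?_⟩
  · rw [abs_mul]
    have := mul_le_mul (h1 x) (h3 x) (abs_nonneg _) hM
    nlinarith [mul_nonneg hM hN]
  · calc |f x * g x - f y * g y| = |f x * (g x - g y) + (f x - f y) * g y| := by ring_nf
      _ ≤ |f x| * |g x - g y| + |f x - f y| * |g y| := by
          rw [← abs_mul, ← abs_mul]; exact abs_add_le _ _
      _ ≤ M * (N * √‖x - y‖) + (M * √‖x - y‖) * N := by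
          have := h1 x; have := h2 x y; have := h3 y; have := h4 x y
          gcongr
      _ = _ := by ring

lemma BH_const (c : ℝ) : BH (fun _ => c) :=
  ⟨continuous_const, |c|, abs_nonneg _, fun _ => le_rfl, fun x y => by simp; positivity⟩

lemma diff_bound {g : E3 → ℝ} (hg : Differentiable ℝ g) {M L : ℝ}
    (hM : ∀ x, |g x| ≤ M) (hL : ∀ x, ‖fderiv ℝ g x‖ ≤ L) (x y : E3) :
    |g x - g y| ≤ √(2 * M) * (√L * √‖x - y‖) := by
  have hL0 : 0 ≤ L := (norm_nonneg _).trans (hL 0)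
  rw [← Real.sqrt_mul hL0]
  refine le_sqrt_mul (abs_nonneg _) ?_ ?_
  · calc |g x - g y| ≤ |g x| + |g y| := abs_sub _ _
      _ ≤ 2 * M := by linarith [hM x, hM y]
  · rw [← Real.norm_eq_abs]
    exact convex_univ.norm_image_sub_le_of_norm_fderiv_le (fun z _ => hg z) (fun z _ => hL z)
      (mem_univ _) (mem_univ _)

lemma BH_of_diff {g : E3 → ℝ} (hg : Differentiable ℝ g) {M L : ℝ}
    (hM : ∀ x, |g x| ≤ M) (hL : ∀ x, ‖fderiv ℝ g x‖ ≤ L) : BH g := by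
  have hM0 : 0 ≤ M := (abs_nonneg _).trans (hM 0)
  refine ⟨hg.continuous, M + √(2 * M) * √L, by positivity, fun x => ?_, fun x y => ?_⟩
  · have := hM x
    have : 0 ≤ √(2 * M) * √L := by positivity
    linarith
  · have := diff_bound hg hM hL x y
    have h2 : 0 ≤ M * √‖x - y‖ := by positivity
    nlinarith

lemma BH_of_compact {g : E3 → ℝ} (hg : ContDiff ℝ 1 g) (hc : HasCompactSupport g) : BH g := by
  obtain ⟨M, hM⟩ := hg.continuous.bounded_above_of_compact_support hc
  obtain ⟨L, hL⟩ := (hg.continuous_fderiv (by simp)).bounded_above_of_compact_support (hc.fderiv ℝ)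
  exact BH_of_diff (hg.differentiable (by simp)) hM hL

lemma summable_sqrt {r : ℝ} (hr : 0 < r) : Summable fun k : ℕ => √(r / 2 ^ k) := by
  have : (fun k : ℕ => √(r / 2 ^ k)) = fun k : ℕ => √r * (√(1 / 2)) ^ k := by
    ext k
    rw [div_eq_mul_one_div, Real.sqrt_mul hr.le, ← one_div_pow]
    congr 1
    rw [Real.sqrt_eq_iff_mul_self_eq]
    · rw [← mul_pow, Real.mul_self_sqrt (by norm_num)]
    · positivity
    · positivity
  rw [this]
  refine (summable_geometric_of_lt_one (by positivity) ?_).mul_left _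
  rw [Real.sqrt_lt' (by norm_num)]; norm_num

lemma summable_h {r : ℝ} : Summable fun k : ℕ => r / 2 ^ k := by
  have : (fun k : ℕ => r / 2 ^ k) = fun k : ℕ => r * (1 / 2) ^ k := by
    ext k; rw [one_div_pow]; ring
  rw [this]
  exact (summable_geometric_of_lt_one (by norm_num) (by norm_num)).mul_left _

/-- the dyadic series -/
noncomputable def SS (η g : E3 → ℝ) (r : ℝ) (x : E3) : ℝ := ∑' k : ℕ, TT η g (r / 2 ^ k) x

section series
variable {η g : E3 → ℝ} {r : ℝ}

lemma SS_summable (hη : ContDiff ℝ ∞ η) (h0 : ∀ x, 1 < ‖x‖ → η x = 0)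
    (hr : 0 < r) {M : ℝ} (hM : ∀ x, |g x| ≤ M) (x : E3) :
    Summable fun k : ℕ => TT η g (r / 2 ^ k) x :=
  Summable.of_norm_bounded (summable_h.mul_right ((∫ z, |η z|) * M))
    fun k => TT_bound hη h0 (by positivity) hM x

lemma SS_BH (hη : ContDiff ℝ ∞ η) (h0 : ∀ x, 1 < ‖x‖ → η x = 0) (hg : Continuous g)
    (hr : 0 < r) {M : ℝ} (hM : ∀ x, |g x| ≤ M) : BH (SS η g r) := by
  have hM0 : 0 ≤ M := (abs_nonneg _).trans (hM 0)
  set C0 := (∫ z, |η z|) * M with hC0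
  set C1 := (∫ z, ‖fderiv ℝ η z‖) * M with hC1
  have hC0' : 0 ≤ C0 := mul_nonneg (integral_nonneg fun _ => abs_nonneg _) hM0
  have hh : ∀ k : ℕ, 0 < r / 2 ^ k := fun k => by positivity
  have hs := SS_summable hη h0 hr hM
  have hb : ∀ k x, |TT η g (r / 2 ^ k) x| ≤ r / 2 ^ k * C0 := fun k x => TT_bound hη h0 (hh k) hM x
  have hsum0 : Summable fun k : ℕ => r / 2 ^ k * C0 := summable_h.mul_right C0
  set K := √(2 * C0) * √C1 with hK
  have hd : ∀ k x y, ‖TT η g (r / 2 ^ k) x - TT η g (r / 2 ^ k) y‖ ≤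
      √(r / 2 ^ k) * (K * √‖x - y‖) := by
    intro k x y
    have := diff_bound ((TT_contDiff hη h0 hg (hh k)).differentiable (by simp)) (hb k)
      (fun x => TT_fderiv_bound hη h0 hg (hh k) hM x) x y
    rw [Real.norm_eq_abs]
    refine this.trans (le_of_eq ?_)
    rw [show 2 * (r / 2 ^ k * C0) = (r / 2 ^ k) * (2 * C0) by ring, Real.sqrt_mul (hh k).le]
    ring
  set Q := ∑' k : ℕ, √(r / 2 ^ k) with hQ
  have hQ0 : 0 ≤ Q := tsum_nonneg fun _ => Real.sqrt_nonneg _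
  set B := ∑' k : ℕ, r / 2 ^ k * C0 with hB
  have hB0 : 0 ≤ B := tsum_nonneg fun k => mul_nonneg (hh k).le hC0'
  have hholder : ∀ x y, |SS η g r x - SS η g r y| ≤ Q * K * √‖x - y‖ := by
    intro x y
    unfold SS
    rw [← (hs x).tsum_sub (hs y), ← Real.norm_eq_abs]
    have := tsum_of_norm_bounded ((summable_sqrt hr).hasSum.mul_right (K * √‖x - y‖))
      (fun k => hd k x y)
    rw [mul_assoc]; exact this
  refine ⟨?_, B + Q * K, by positivity, fun x => ?_, fun x y => ?_⟩
  · exact continuous_tsum (fun k => (TT_contDiff hη h0 hg (hh k)).continuous) hsum0 hb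
  · have := tsum_of_norm_bounded (f := fun k : ℕ => TT η g (r / 2 ^ k) x) hsum0.hasSum (fun k => hb k x)
    have h2 : 0 ≤ Q * K := by positivity
    have h3 : |SS η g r x| ≤ B := this
    linarith
  · have := hholder x y
    have h2 : 0 ≤ B * √‖x - y‖ := by positivity
    linarith

lemma SS_C1 (hη : ContDiff ℝ ∞ η) (h0 : ∀ x, 1 < ‖x‖ → η x = 0) (hg : BH g)
    (hr : 0 < r) : ContDiff ℝ 1 (SS η g r) := by
  obtain ⟨hgc, M, hM0, hM, hMH⟩ := hg
  have hh : ∀ k : ℕ, 0 < r / 2 ^ k := fun k => by positivity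
  set v : ℕ → ℕ → ℝ := fun n k => if n = 0 then r / 2 ^ k * ((∫ z, |η z|) * M) else
    (∫ z, ‖fderiv ℝ η z‖) * (M * √(r / 2 ^ k)) with hv
  refine contDiff_tsum (N := 1) (v := v) (fun k => (TT_contDiff hη h0 hgc (hh k)).of_le (by simp)) ?_ ?_
  · intro n hn
    by_cases h : n = 0
    · simp only [hv, h, if_true]; exact summable_h.mul_right _
    · simp only [hv, h, if_false]
      exact ((summable_sqrt hr).mul_left M).mul_left _
  · intro n k x hn
    have hn' : n ≤ 1 := by exact_mod_cast hn
    interval_cases n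
    · rw [norm_iteratedFDeriv_zero]
      simpa [hv] using TT_bound hη h0 (hh k) hM x
    · have := TT_fderiv_bound' hη h0 hgc (hh k) hM0 hMH x
      rw [norm_iteratedFDeriv_one]
      simpa [hv] using this

end series

/-- the full representation formula -/
noncomputable def RR (ρ η v g : E3 → ℝ) (r : ℝ) (x : E3) : ℝ :=
  r⁻¹ * TT ρ v r x + SS η g r x

lemma RR_eq {ρ η v g : E3 → ℝ} {r : ℝ} (hρ : ContDiff ℝ ∞ ρ) (hρ0 : ∀ x, 1 < ‖x‖ → ρ x = 0)
    (hη : ContDiff ℝ ∞ η) (h0 : ∀ x, 1 < ‖x‖ → η x = 0) (hv : Continuous v)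
    (hr : 0 < r) {M N : ℝ} (hM : ∀ x, |g x| ≤ M) (hN : ∀ x, |v x| ≤ N) (x : E3)
    (H : ∀ h, 0 < h → h ≤ r → ∫ z, (8 * ρ ((2 : ℝ) • z) - ρ z) * v (x - h • z) =
      h * ∫ z, η z * g (x - h • z)) :
    RR ρ η v g r x = (∫ z, ρ z) * v x := by
  have hh : ∀ k : ℕ, 0 < r / 2 ^ k := fun k => by positivity
  have hc := compact_of hρ0
  set P : ℕ → ℝ := fun k => ∫ z, ρ z * v (x - (r / 2 ^ k) • z) with hP
  have hstep : ∀ k, P (k + 1) - P k = TT η g (r / 2 ^ k) x := by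
    intro k
    rw [TT, ← H _ (hh k) (div_le_self hr.le (one_le_pow₀ (by norm_num)))]
    have e1 : ∫ z, 8 * (ρ ((2 : ℝ) • z) * v (x - (r / 2 ^ k) • z)) = P (k + 1) := by
      have := Measure.integral_comp_smul (volume : Measure E3)
        (fun z => ρ z * v (x - (r / 2 ^ (k + 1)) • z)) 2
      have h3 : Module.finrank ℝ E3 = 3 := by simp
      rw [h3] at this
      rw [integral_const_mul]
      have h4 : ∀ z : E3, (r / 2 ^ (k + 1)) • (2 : ℝ) • z = (r / 2 ^ k) • z := by
        intro z; rw [smul_smul]; congr 1; rw [pow_succ]; field_simp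
      simp only [h4] at this
      rw [this]
      simp only [hP, smul_eq_mul]
      rw [← mul_assoc]; norm_num
    rw [← e1, hP, ← integral_sub]
    · congr 1; ext z; ring
    · refine Integrable.const_mul ?_ 8
      refine Continuous.integrable_of_hasCompactSupport (by fun_prop) ?_
      exact (hc.comp_smul (two_ne_zero)).mul_right
    · refine Continuous.integrable_of_hasCompactSupport (by fun_prop) hc.mul_right
  have hlim : Tendsto P atTop (𝓝 (∫ z, ρ z * v x)) := by
    refine tendsto_integral_of_dominated_convergence (fun z => |ρ z| * N) ?_ ?_ ?_ ?_
    · intro k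
      exact (by fun_prop : Continuous fun z => ρ z * v (x - (r / 2 ^ k) • z)).aestronglyMeasurable
    · exact ((hρ.continuous.integrable_of_hasCompactSupport hc).abs).mul_const N
    · intro k
      refine Eventually.of_forall fun z => ?_
      rw [Real.norm_eq_abs, abs_mul]
      exact mul_le_mul_of_nonneg_left (hN _) (abs_nonneg _)
    · refine Eventually.of_forall fun z => ?_
      have h1 : Tendsto (fun k : ℕ => r / 2 ^ k) atTop (𝓝 0) := summable_h.tendsto_atTop_zero
      have h2 : Tendsto (fun k : ℕ => x - (r / 2 ^ k) • z) atTop (𝓝 (x - (0 : ℝ) • z)) :=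
        tendsto_const_nhds.sub (h1.smul_const z)
      rw [zero_smul, sub_zero] at h2
      exact tendsto_const_nhds.mul ((hv.tendsto x).comp h2)
  rw [integral_mul_const] at hlim
  have hsum := (SS_summable hη h0 hr hM x).hasSum.tendsto_sum_nat
  have : (fun n => ∑ k ∈ Finset.range n, TT η g (r / 2 ^ k) x) = fun n => P n - P 0 := by
    ext n
    rw [← Finset.sum_range_sub]
    exact Finset.sum_congr rfl fun k _ => (hstep k).symm
  rw [this] at hsum
  have h2 := tendsto_nhds_unique hsum (hlim.sub_const (P 0))
  rw [RR, SS, h2, TT, ← mul_assoc, inv_mul_cancel₀ hr.ne']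
  simp [hP]

lemma RR_BH {ρ η v g : E3 → ℝ} {r : ℝ} (hρ : ContDiff ℝ ∞ ρ) (hρ0 : ∀ x, 1 < ‖x‖ → ρ x = 0)
    (hη : ContDiff ℝ ∞ η) (h0 : ∀ x, 1 < ‖x‖ → η x = 0) (hv : Continuous v) (hg : Continuous g)
    (hr : 0 < r) {M N : ℝ} (hM : ∀ x, |g x| ≤ M) (hN : ∀ x, |v x| ≤ N) :
    BH (RR ρ η v g r) := by
  refine BH.add (BH.mul (BH_const _) ?_) (SS_BH hη h0 hg hr hM)
  exact BH_of_diff ((TT_contDiff hρ hρ0 hv hr).differentiable (by simp))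
    (TT_bound hρ hρ0 hr hN) (TT_fderiv_bound hρ hρ0 hv hr hN)

lemma RR_C1 {ρ η v g : E3 → ℝ} {r : ℝ} (hρ : ContDiff ℝ ∞ ρ) (hρ0 : ∀ x, 1 < ‖x‖ → ρ x = 0)
    (hη : ContDiff ℝ ∞ η) (h0 : ∀ x, 1 < ‖x‖ → η x = 0) (hv : Continuous v) (hg : BH g)
    (hr : 0 < r) : ContDiff ℝ 1 (RR ρ η v g r) :=
  (contDiff_const.mul ((TT_contDiff hρ hρ0 hv hr).of_le (by simp))).add (SS_C1 hη h0 hg hr)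

lemma two_le_inf : (2 : ℕ∞ω) ≤ ∞ := WithTop.coe_le_coe.2 le_top

lemma ibp {i : Fin 3} {φ u : E3 → ℝ} (hφ : ContDiff ℝ 1 φ) (hc : HasCompactSupport φ)
    (hu : ContDiff ℝ 1 u) : ∫ x, φ x * pd i u x = - ∫ x, pd i φ x * u x := by
  have c1 : Continuous (pd i φ) := (pd_contDiff (m := 0) hφ (by simp)).continuous
  have c2 : Continuous (pd i u) := (pd_contDiff (m := 0) hu (by simp)).continuous
  have c3 := hφ.continuous
  have c4 := hu.continuous
  refine integral_mul_fderiv_eq_neg_fderiv_mul_of_integrable (μ := volume) ?_ ?_ ?_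
    (fun x _ => hφ.differentiable (by simp) x) (fun x _ => hu.differentiable (by simp) x)
  · exact Continuous.integrable_of_hasCompactSupport (c1.mul c4) (pd_compact hc).mul_right
  · exact Continuous.integrable_of_hasCompactSupport (c3.mul c2) hc.mul_right
  · exact Continuous.integrable_of_hasCompactSupport (c3.mul c4) hc.mul_right

lemma swap {i j : Fin 3} {ζ u : E3 → ℝ} (hζ : ContDiff ℝ 2 ζ) (hc : HasCompactSupport ζ)
    (hu : ContDiff ℝ 1 u) : ∫ x, pd i ζ x * pd j u x = ∫ x, pd j ζ x * pd i u x := by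
  rw [ibp (pd_contDiff hζ (by norm_num)) (pd_compact hc) hu,
    ibp (pd_contDiff hζ (by norm_num)) (pd_compact hc) hu]
  congr 2
  ext x
  rw [pd_symm hζ.contDiffAt]

/-- weak form of `div V = g` -/
def WD (V : Fin 3 → E3 → ℝ) (g : E3 → ℝ) (U : Set E3) : Prop :=
  ∀ φ : E3 → ℝ, ContDiff ℝ ∞ φ → HasCompactSupport φ → tsupport φ ⊆ U →
    ∫ x, ∑ j, pd j φ x * V j x = - ∫ x, φ x * g x

lemma pd_scale {i : Fin 3} {F : E3 → ℝ} (hF : Differentiable ℝ F) (x : E3) (h : ℝ) (y : E3) :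
    pd i (fun y => F (h⁻¹ • (x - y))) y = - h⁻¹ * pd i F (h⁻¹ • (x - y)) := by
  have h2 : HasFDerivAt (fun y : E3 => h⁻¹ • (x - y)) (h⁻¹ • (- ContinuousLinearMap.id ℝ E3)) y :=
    ((hasFDerivAt_id y).const_sub x).const_smul h⁻¹
  have h3 : HasFDerivAt (fun y : E3 => F (h⁻¹ • (x - y))) _ y :=
    (hF (h⁻¹ • (x - y))).hasFDerivAt.comp y h2
  rw [pd, h3.fderiv]
  simp [pd]

lemma change_var (a b : E3 → ℝ) (x : E3) {h : ℝ} (hh : 0 < h) :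
    ∫ y, a (h⁻¹ • (x - y)) * b y = h ^ 3 * ∫ z, a z * b (x - h • z) := by
  have h1 := Measure.integral_comp_smul (volume : Measure E3)
        (fun z => a z * b (x - h • z)) h⁻¹
  have h3 : Module.finrank ℝ E3 = 3 := by simp
  rw [h3] at h1
  have h2 := integral_sub_left_eq_self (fun w => a (h⁻¹ • w) * b (x - h • h⁻¹ • w)) volume x
  rw [h1] at h2
  simp only [smul_smul, mul_inv_cancel₀ hh.ne', one_smul, sub_sub_cancel, smul_eq_mul] at h2
  rw [h2, inv_pow, inv_inv, abs_of_pos (by positivity)]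

lemma weakH {u κ g : E3 → ℝ} (hu : ContDiff ℝ 1 u) (hκ : ContDiff ℝ ∞ κ)
    (hκ0 : ∀ x, 1 < ‖x‖ → κ x = 0) {U : Set E3} (hW : WD (fun j => pd j u) g U)
    {x : E3} {h : ℝ} (hh : 0 < h) (hx : closedBall x h ⊆ U) (i : Fin 3) :
    ∫ z, (∑ j, pd j (pd j κ) z) * pd i u (x - h • z) = h * ∫ z, pd i κ z * g (x - h • z) := by
  set ψ : E3 → ℝ := fun y => κ (h⁻¹ • (x - y)) with hψ
  have hψc : ContDiff ℝ ∞ ψ := hκ.comp (by fun_prop)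
  have hψ0 : ∀ y, y ∉ closedBall x h → ψ y = 0 := by
    intro y hy
    apply hκ0
    rw [norm_smul, norm_inv, Real.norm_eq_abs, abs_of_pos hh]
    rw [mem_closedBall, dist_comm, dist_eq_norm, not_le] at hy
    rw [inv_mul_eq_div, one_lt_div hh]; exact hy
  have hcs : HasCompactSupport ψ := HasCompactSupport.intro (isCompact_closedBall x h) hψ0
  have hts : tsupport ψ ⊆ closedBall x h := by
    refine closure_minimal (fun y hy => ?_) isClosed_closedBall
    by_contra hc
    exact hy (hψ0 y hc)
  have p1 : ∀ j, pd j ψ = fun y => - h⁻¹ * pd j κ (h⁻¹ • (x - y)) := fun j =>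
    funext fun y => pd_scale (hκ.differentiable (by simp)) x h y
  have hκj : ∀ j, ContDiff ℝ ∞ (pd j κ) := fun j => pd_contDiff hκ (by simp)
  have p2 : ∀ j, pd j (pd j ψ) = fun y => h⁻¹ ^ 2 * pd j (pd j κ) (h⁻¹ • (x - y)) := by
    intro j
    ext y
    have hd : Differentiable ℝ fun y => pd j κ (h⁻¹ • (x - y)) :=
      ((hκj j).comp (by fun_prop : ContDiff ℝ ∞ fun y : E3 => h⁻¹ • (x - y))).differentiable (by simp)
    rw [p1 j, pd_mul (by fun_prop) (hd y), pd_scale ((hκj j).differentiable (by simp))]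
    simp [pd]; ring
  have hψi : ∀ i, ContDiff ℝ ∞ (pd i ψ) := fun i => pd_contDiff hψc (by simp)
  have cu : ∀ j, Continuous (pd j u) := fun j => (pd_contDiff (m := 0) hu (by simp)).continuous
  have hw := hW (pd i ψ) (hψi i) (pd_compact hcs) (pd_support.trans (hts.trans hx))
  have hint : ∀ a b c, Integrable fun y => pd a (pd b ψ) y * pd c u y := fun a b c =>
    Continuous.integrable_of_hasCompactSupport
      ((pd_contDiff (m := 0) (hψi b) (by simp)).continuous.mul (cu c))
      (pd_compact (pd_compact hcs)).mul_right
  have key : ∫ y, (∑ j, pd j (pd j ψ) y) * pd i u y = - ∫ y, pd i ψ y * g y := by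
    rw [← hw, integral_finsetSum _ fun j _ => hint j i j]
    simp_rw [Finset.sum_mul]
    rw [integral_finsetSum _ fun j _ => hint j j i]
    refine Finset.sum_congr rfl fun j _ => ?_
    rw [swap ((hψi j).of_le two_le_inf) (pd_compact hcs) hu]
    congr 1; ext y
    rw [pd_symm (hψc.contDiffAt.of_le two_le_inf)]
  simp only [p2] at key
  rw [p1 i] at key
  simp_rw [← Finset.mul_sum, mul_assoc] at key
  rw [integral_const_mul, integral_const_mul,
    change_var (fun z => ∑ j, pd j (pd j κ) z) (pd i u) x hh, change_var (pd i κ) g x hh] at key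
  field_simp at key
  have : h ^ 2 ≠ 0 := by positivity
  linarith

lemma WD.congr {V : Fin 3 → E3 → ℝ} {g g' : E3 → ℝ} {U U' : Set E3} (h : WD V g U) (hU : U' ⊆ U)
    (hg : ∀ x ∈ U', g x = g' x) : WD V g' U' := by
  intro φ h1 h2 h3
  rw [h φ h1 h2 (h3.trans hU)]
  congr 2
  ext x
  by_cases hx : x ∈ U'
  · rw [hg x hx]
  · rw [image_eq_zero_of_notMem_tsupport fun h => hx (h3 h)]; simp

lemma regularity {u : E3 → ℝ} (hu : ContDiff ℝ 1 u) (hcu : HasCompactSupport u)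
    {b : Fin 3 → E3 → ℝ} (hb : ∀ j, ContDiff ℝ 1 (b j)) (hcb : ∀ j, HasCompactSupport (b j))
    {p : E3} {R : ℝ} (hR : 0 < R)
    (hW : WD (fun j => pd j u) (fun x => ∑ j, b j x * pd j u x) (ball p R)) :
    ∃ V : Fin 3 → E3 → ℝ, (∀ j, ContDiff ℝ 1 (V j)) ∧
      ∀ j, ∀ x ∈ ball p (R / 4), pd j u x = V j x := by
  obtain ⟨κ, ρ, hκ, hρ, hκ0, hρ0, hc, hΔ⟩ := exists_kernel
  set c := ∫ x, ρ x with hcdef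
  have hη : ∀ i, ContDiff ℝ ∞ (pd i κ) := fun i => pd_contDiff hκ (by simp)
  have hη0 : ∀ i, ∀ x, 1 < ‖x‖ → pd i κ x = 0 := by
    intro i x hx
    have : κ =ᶠ[𝓝 x] fun _ => 0 := by
      filter_upwards [continuous_norm.continuousAt.eventually (eventually_gt_nhds hx)] with y hy
      exact hκ0 y hy
    rw [pd_congr this]; simp [pd]
  have cu : ∀ j, Continuous (pd j u) := fun j => (pd_contDiff (m := 0) hu (by simp)).continuous
  have hN : ∀ j, ∃ N, ∀ x, |pd j u x| ≤ N := fun j =>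
    (cu j).bounded_above_of_compact_support (pd_compact hcu)
  choose N hN using hN
  have rep : ∀ (g : E3 → ℝ) (r : ℝ), 0 < r → (∃ M, ∀ x, |g x| ≤ M) →
      WD (fun j => pd j u) g (ball p (2 * r)) → ∀ i, ∀ x ∈ ball p r,
      pd i u x = c⁻¹ * RR ρ (pd i κ) (pd i u) g (r / 2) x := by
    rintro g r hr ⟨M, hM⟩ hw i x hx
    rw [RR_eq hρ hρ0 (hη i) (hη0 i) (cu i) (by positivity) hM (hN i) x]
    · rw [← mul_assoc, inv_mul_cancel₀ hc.ne', one_mul]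
    · intro h hh hhr
      simp_rw [← hΔ]
      refine weakH hu hκ hκ0 hw hh ?_ i
      intro y hy
      rw [mem_ball] at hx ⊢
      rw [mem_closedBall] at hy
      linarith [dist_triangle y x p]
  set g1 : E3 → ℝ := fun x => ∑ j, b j x * pd j u x with hg1
  have hg1c : Continuous g1 := by
    refine continuous_finsetSum _ fun j _ => (hb j).continuous.mul (cu j)
  have hg1b : ∃ M, ∀ x, |g1 x| ≤ M := by
    have : ∀ j, ∃ B, ∀ x, |b j x| ≤ B := fun j =>
      (hb j).continuous.bounded_above_of_compact_support (hcb j)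
    choose B hB using this
    refine ⟨∑ j, B j * N j, fun x => (Finset.abs_sum_le_sum_abs _ _).trans ?_⟩
    refine Finset.sum_le_sum fun j _ => ?_
    rw [abs_mul]
    exact mul_le_mul (hB j x) (hN j x) (abs_nonneg _) ((abs_nonneg _).trans (hB j x))
  have e1 := rep g1 (R / 2) (by positivity) hg1b (by rwa [mul_div_cancel₀ R two_ne_zero])
  set V1 : Fin 3 → E3 → ℝ := fun i x => c⁻¹ * RR ρ (pd i κ) (pd i u) g1 (R / 2 / 2) x with hV1
  have hV1 : ∀ i, BH (V1 i) := by
    intro i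
    obtain ⟨M, hM⟩ := hg1b
    exact (BH_const _).mul (RR_BH hρ hρ0 (hη i) (hη0 i) (cu i) hg1c (by positivity) hM (hN i))
  set g2 : E3 → ℝ := fun x => b 0 x * V1 0 x + b 1 x * V1 1 x + b 2 x * V1 2 x with hg2
  have hg2B : BH g2 := by
    have h := fun j => (BH_of_compact (hb j) (hcb j)).mul (hV1 j)
    exact ((h 0).add (h 1)).add (h 2)
  have hw2 : WD (fun j => pd j u) g2 (ball p (2 * (R / 4))) := by
    refine hW.congr (ball_subset_ball (by linarith)) ?_
    intro x hx
    have hx' : x ∈ ball p (R / 2) := ball_subset_ball (by linarith) hx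
    simp only [hg1, hg2, Fin.sum_univ_three]
    rw [e1 0 x hx', e1 1 x hx', e1 2 x hx']
  have e2 := rep g2 (R / 4) (by positivity) (by obtain ⟨_, M, _, hM, _⟩ := hg2B; exact ⟨M, hM⟩) hw2
  refine ⟨_, fun i => ?_, e2⟩
  exact contDiff_const.mul (RR_C1 hρ hρ0 (hη i) (hη0 i) (cu i) hg2B (by positivity))

/-- curl -/
noncomputable def crl (A : Fin 3 → E3 → ℝ) : Fin 3 → E3 → ℝ :=
  ![fun x => pd 1 (A 2) x - pd 2 (A 1) x, fun x => pd 2 (A 0) x - pd 0 (A 2) x,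
    fun x => pd 0 (A 1) x - pd 1 (A 0) x]

lemma crl_congr {A B : Fin 3 → E3 → ℝ} {x : E3} (h : ∀ j, A j =ᶠ[𝓝 x] B j) (j : Fin 3) :
    crl A j x = crl B j x := by
  fin_cases j <;> simp [crl, pd_congr (h _)]

lemma crl_cont {A : Fin 3 → E3 → ℝ} (hA : ∀ j, ContDiff ℝ 1 (A j)) (j : Fin 3) :
    Continuous (crl A j) := by
  have h : ∀ i j, Continuous (pd i (A j)) := fun i j =>
    (pd_contDiff (m := 0) (hA j) (by simp)).continuous
  fin_cases j
  · exact (h 1 2).sub (h 2 1)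
  · exact (h 2 0).sub (h 0 2)
  · exact (h 0 1).sub (h 1 0)

lemma crl_weak {A : Fin 3 → E3 → ℝ} (hA : ∀ j, ContDiff ℝ 1 (A j)) {ζ : E3 → ℝ}
    (hζ : ContDiff ℝ 2 ζ) (hc : HasCompactSupport ζ) :
    ∫ x, ∑ j, pd j ζ x * crl A j x = 0 := by
  have hi : ∀ a b c, Integrable fun x => pd a ζ x * pd b (A c) x := fun a b c =>
    Continuous.integrable_of_hasCompactSupport
      ((pd_contDiff (m := 0) hζ (by norm_num)).continuous.mul
        (pd_contDiff (m := 0) (hA c) (by simp)).continuous) (pd_compact hc).mul_right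
  have : ∀ x, ∑ j, pd j ζ x * crl A j x =
    ((pd 0 ζ x * pd 1 (A 2) x - pd 1 ζ x * pd 0 (A 2) x) +
    (pd 1 ζ x * pd 2 (A 0) x - pd 2 ζ x * pd 1 (A 0) x)) +
    (pd 2 ζ x * pd 0 (A 1) x - pd 0 ζ x * pd 2 (A 1) x) := by
    intro x
    simp [Fin.sum_univ_three, crl]; ring
  simp_rw [this]
  have hs : ∀ a b c d e g, Integrable fun x =>
      pd a ζ x * pd b (A c) x - pd d ζ x * pd e (A g) x :=
    fun a b c d e g => (hi a b c).sub (hi d e g)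
  have hs2 : Integrable fun x => ((pd 0 ζ x * pd 1 (A 2) x - pd 1 ζ x * pd 0 (A 2) x) +
    (pd 1 ζ x * pd 2 (A 0) x - pd 2 ζ x * pd 1 (A 0) x)) := (hs _ _ _ _ _ _).add (hs _ _ _ _ _ _)
  rw [integral_add hs2 (hs _ _ _ _ _ _),
    integral_add (hs _ _ _ _ _ _) (hs _ _ _ _ _ _),
    integral_sub (hi _ _ _) (hi _ _ _), integral_sub (hi _ _ _) (hi _ _ _),
    integral_sub (hi _ _ _) (hi _ _ _),
    swap (i := 0) (j := 1) hζ hc (hA 2), swap (i := 1) (j := 2) hζ hc (hA 0),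
    swap (i := 2) (j := 0) hζ hc (hA 1)]
  ring

lemma pd_zero_off {i : Fin 3} {φ : E3 → ℝ} {x : E3} (h : x ∉ tsupport φ) : pd i φ x = 0 :=
  image_eq_zero_of_notMem_tsupport fun h' => h (pd_support h')

lemma glob {n : ℕ∞ω} {χ F : E3 → ℝ} {G : Set E3} (hG : IsOpen G) (hχ : ContDiff ℝ n χ)
    (hs : tsupport χ ⊆ G) (hF : ContDiffOn ℝ n F G) : ContDiff ℝ n fun x => χ x * F x := by
  rw [contDiff_iff_contDiffAt]
  intro x
  by_cases hx : x ∈ G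
  · exact hχ.contDiffAt.mul (hF.contDiffAt (hG.mem_nhds hx))
  · have : (fun x => χ x * F x) =ᶠ[𝓝 x] fun _ => 0 := by
      filter_upwards [(isClosed_tsupport χ).isOpen_compl.mem_nhds fun h => hx (hs h)] with y hy
      rw [image_eq_zero_of_notMem_tsupport hy, zero_mul]
    exact contDiffAt_const.congr_of_eventuallyEq this

lemma fderiv_eq_pd {F : E3 → ℝ} (x : E3) : fderiv ℝ F x =
    pd 0 F x • ContinuousLinearMap.fst ℝ ℝ (ℝ × ℝ) +
    pd 1 F x • (ContinuousLinearMap.fst ℝ ℝ ℝ).comp (ContinuousLinearMap.snd ℝ ℝ (ℝ × ℝ)) +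
    pd 2 F x • (ContinuousLinearMap.snd ℝ ℝ ℝ).comp (ContinuousLinearMap.snd ℝ ℝ (ℝ × ℝ)) := by
  ext <;> simp [pd, ee]
  rfl

lemma div_zero {F : Fin 3 → E3 → ℝ} (hF : ∀ j, ContDiff ℝ 1 (F j)) {p : E3} {r : ℝ} (hr : 0 < r)
    (hW : WD F (fun _ => 0) (ball p r)) : ∑ j, pd j (F j) p = 0 := by
  have hcF : ∀ j, Continuous (pd j (F j)) := fun j =>
    (pd_contDiff (m := 0) (hF j) (by simp)).continuous
  have hc : Continuous fun x => ∑ j, pd j (F j) x := continuous_finsetSum _ fun j _ => hcF j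
  have h1 := IsOpen.ae_eq_zero_of_integral_contDiff_smul_eq_zero (μ := (volume : Measure E3))
    (isOpen_ball (x := p) (ε := r))
    (hc.locallyIntegrable.locallyIntegrableOn _) (by
      intro φ h1 h2 h3
      have hw := hW φ h1 h2 h3
      simp only [mul_zero, integral_zero, neg_zero] at hw
      have h1' : ContDiff ℝ 1 φ := h1.of_le (by simp)
      simp only [smul_eq_mul, Finset.mul_sum]
      rw [integral_finsetSum]
      · rw [integral_finsetSum] at hw
        · rw [← neg_eq_zero, ← hw, ← Finset.sum_neg_distrib]
          refine Finset.sum_congr rfl fun j _ => ?_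
          rw [ibp h1' h2 (hF j), neg_neg]
        · intro j _
          exact Continuous.integrable_of_hasCompactSupport
            ((pd_contDiff (m := 0) h1' (by simp)).continuous.mul (hF j).continuous)
            (pd_compact h2).mul_right
      · intro j _
        exact Continuous.integrable_of_hasCompactSupport
          (h1.continuous.mul (hcF j)) h2.mul_right)
  have h2 : (fun x => ∑ j, pd j (F j) x) =ᵐ[volume.restrict (ball p r)] fun _ => (0 : ℝ) := by
    rw [Filter.EventuallyEq, ae_restrict_iff' measurableSet_ball]
    exact h1
  exact Measure.eqOn_open_of_ae_eq h2 isOpen_ball hc.continuousOn continuousOn_const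
    (mem_ball_self hr)

lemma main_local {G : Set E3} (hG : IsOpen G) {f u : E3 → ℝ} {A : Fin 3 → E3 → ℝ}
    (hf : ContDiffOn ℝ 2 f G) (hfp : ∀ x ∈ G, 0 < f x) (hu : ContDiffOn ℝ 1 u G)
    (hA : ∀ j, ContDiffOn ℝ 1 (A j) G)
    (hcurl : ∀ x ∈ G, ∀ j, f x ^ 2 * pd j u x = crl A j x) {p : E3} (hp : p ∈ G) :
    ContDiffAt ℝ 2 u p ∧ ∑ j, pd j (fun x => f x ^ 2 * pd j u x) p = 0 := by
  obtain ⟨ε, hε, hεG⟩ := Metric.isOpen_iff.1 hG p hp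
  let χ : ContDiffBump p := ⟨ε / 4, ε / 2, by positivity, by linarith⟩
  have hχs : tsupport χ ⊆ G := by
    rw [χ.tsupport_eq]
    exact (closedBall_subset_ball (by simp only [χ]; linarith)).trans hεG
  have hχc : HasCompactSupport χ := χ.hasCompactSupport
  have hχ : ∀ {n : ℕ∞}, ContDiff ℝ n χ := χ.contDiff
  have hχ1 : ∀ x ∈ ball p (ε / 4), χ x = 1 := fun x hx =>
    χ.one_of_mem_closedBall (ball_subset_closedBall hx)
  have hχe : ∀ F : E3 → ℝ, ∀ x ∈ ball p (ε / 4), (fun x => χ x * F x) =ᶠ[𝓝 x] F := by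
    intro F x hx
    filter_upwards [isOpen_ball.mem_nhds hx] with y hy
    rw [hχ1 y hy, one_mul]
  have hbG : ball p (ε / 4) ⊆ G := (ball_subset_ball (by linarith)).trans hεG
  set a : E3 → ℝ := fun x => χ x * (f x ^ 2)⁻¹ with ha
  have hac : ContDiff ℝ 2 a := glob hG (hχ (n := 2)) hχs
    ((hf.pow 2).inv fun x hx => (pow_pos (hfp x hx) 2).ne')
  set q : E3 → ℝ := fun x => χ x * f x ^ 2 with hq
  have hqc : ContDiff ℝ 2 q := glob hG (hχ (n := 2)) hχs (hf.pow 2)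
  set uu : E3 → ℝ := fun x => χ x * u x with huu
  have huc : ContDiff ℝ 1 uu := glob hG (hχ (n := 1)) hχs hu
  set AA : Fin 3 → E3 → ℝ := fun j x => χ x * A j x with hAA
  have hAc : ∀ j, ContDiff ℝ 1 (AA j) := fun j => glob hG (hχ (n := 1)) hχs (hA j)
  have hu1 : ∀ x ∈ ball p (ε / 4), ∀ j, pd j uu x = pd j u x := fun x hx j => pd_congr (hχe u x hx)
  have hA1 : ∀ x ∈ ball p (ε / 4), ∀ j, crl AA j x = f x ^ 2 * pd j u x := fun x hx j => by
    rw [hcurl x (hbG hx)]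
    exact crl_congr (fun j => hχe (A j) x hx) j
  set b : Fin 3 → E3 → ℝ := fun j x => pd j a x * q x with hb
  have hbc : ∀ j, ContDiff ℝ 1 (b j) := fun j =>
    (pd_contDiff hac (by norm_num)).mul (hqc.of_le (by norm_num))
  have hbs : ∀ j, HasCompactSupport (b j) := fun j => by
    have : HasCompactSupport q := hχc.mul_right
    exact this.mul_left
  have cu : ∀ j, Continuous (pd j uu) := fun j => (pd_contDiff (m := 0) huc (by simp)).continuous
  have hW : WD (fun j => pd j uu) (fun x => ∑ j, b j x * pd j uu x) (ball p (ε / 4)) := by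
    intro φ h1 h2 h3
    have h12 : ContDiff ℝ 2 φ := h1.of_le two_le_inf
    have hz := crl_weak hAc (ζ := fun x => a x * φ x) (hac.mul h12) h2.mul_left
    rw [eq_neg_iff_add_eq_zero, ← integral_add, ← hz]
    · congr 1
      ext x
      by_cases hx : x ∈ tsupport φ
      · have hx' := h3 hx
        rw [Finset.mul_sum, ← Finset.sum_add_distrib]
        refine Finset.sum_congr rfl fun j _ => ?_
        simp only [hu1 x hx' j]
        rw [hA1 x hx' j, pd_mul (hac.differentiable (by simp) x)
          (h12.differentiable (by simp) x)]
        have hfx := (hfp x (hbG hx')).ne'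
        simp only [hb, ha, hq, hχ1 x hx', one_mul]
        field_simp
        ring
      · have hx2 : x ∉ tsupport fun x => a x * φ x := fun h => hx (tsupport_mul_subset_right h)
        simp [pd_zero_off hx, pd_zero_off hx2, image_eq_zero_of_notMem_tsupport hx]
    · refine integrable_finsetSum _ fun j _ => ?_
      exact Continuous.integrable_of_hasCompactSupport
        ((pd_contDiff (m := 0) h12 (by norm_num)).continuous.mul (cu j)) (pd_compact h2).mul_right
    · refine Continuous.integrable_of_hasCompactSupport (h1.continuous.mul ?_) h2.mul_right
      exact continuous_finsetSum _ fun j _ => (hbc j).continuous.mul (cu j)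
  obtain ⟨V, hV, hVe⟩ := regularity huc hχc.mul_right hbc hbs (by positivity) hW
  have hsub : ball p (ε / 4 / 4) ⊆ ball p (ε / 4) := ball_subset_ball (by linarith)
  have hVu : ∀ x ∈ ball p (ε / 4 / 4), ∀ j, pd j u x = V j x := fun x hx j => by
    rw [← hVe j x hx, hu1 x (hsub hx)]
  have hp4 : p ∈ ball p (ε / 4 / 4) := mem_ball_self (by positivity)
  refine ⟨?_, ?_⟩
  · rw [show (2 : ℕ∞ω) = ((1 : ℕ) : ℕ∞ω) + 1 by norm_num, contDiffAt_succ_iff_hasFDerivAt]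
    refine ⟨fun x => V 0 x • ContinuousLinearMap.fst ℝ ℝ (ℝ × ℝ) +
      V 1 x • (ContinuousLinearMap.fst ℝ ℝ ℝ).comp (ContinuousLinearMap.snd ℝ ℝ (ℝ × ℝ)) +
      V 2 x • (ContinuousLinearMap.snd ℝ ℝ ℝ).comp (ContinuousLinearMap.snd ℝ ℝ (ℝ × ℝ)),
      ⟨ball p (ε / 4 / 4), isOpen_ball.mem_nhds hp4, fun x hx => ?_⟩, ?_⟩
    · simp only [← hVu x hx, ← fderiv_eq_pd]
      exact ((hu.contDiffAt (hG.mem_nhds (hbG (hsub hx)))).differentiableAt (by simp)).hasFDerivAt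
    · have h0 := hV 0
      have h1 := hV 1
      have h2 := hV 2
      rw [Nat.cast_one]
      exact (((h0.smul contDiff_const).add (h1.smul contDiff_const)).add
        (h2.smul contDiff_const)).contDiffAt
  · have hd := div_zero (F := fun j x => q x * V j x) (p := p) (r := ε / 4 / 4)
      (fun j => (hqc.of_le (by norm_num)).mul (hV j)) (by positivity) (by
        intro φ h1 h2 h3
        have h12 : ContDiff ℝ 2 φ := h1.of_le two_le_inf
        simp only [mul_zero, integral_zero, neg_zero]
        rw [← crl_weak hAc h12 h2]
        congr 1; ext x
        refine Finset.sum_congr rfl fun j _ => ?_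
        by_cases hx : x ∈ tsupport φ
        · rw [hA1 x (hsub (h3 hx)), hVu x (h3 hx)]
          simp only [hq, hχ1 x (hsub (h3 hx)), one_mul]
        · simp [pd_zero_off hx])
    rw [← hd]
    refine Finset.sum_congr rfl fun j _ => pd_congr ?_
    filter_upwards [isOpen_ball.mem_nhds hp4] with x hx
    rw [hVu x hx]
    simp only [hq, hχ1 x (hsub hx), one_mul]

lemma line1 (p : E3) : HasDerivAt (fun t : ℝ => ((t, p.2.1, p.2.2) : E3)) (ee 0) p.1 :=
  (hasDerivAt_id p.1).prodMk ((hasDerivAt_const p.1 p.2.1).prodMk (hasDerivAt_const p.1 p.2.2))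

lemma line2 (p : E3) : HasDerivAt (fun t : ℝ => ((p.1, t, p.2.2) : E3)) (ee 1) p.2.1 :=
  (hasDerivAt_const p.2.1 p.1).prodMk ((hasDerivAt_id p.2.1).prodMk (hasDerivAt_const p.2.1 p.2.2))

lemma line3 (p : E3) : HasDerivAt (fun t : ℝ => ((p.1, p.2.1, t) : E3)) (ee 2) p.2.2 :=
  (hasDerivAt_const p.2.2 p.1).prodMk ((hasDerivAt_const p.2.2 p.2.1).prodMk (hasDerivAt_id p.2.2))

section
variable {X : Type*} [NormedAddCommGroup X] [NormedSpace ℝ X]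

lemma dl1 {F : E3 → X} {p : E3} (h : DifferentiableAt ℝ F p) :
    deriv (fun t => F (t, p.2.1, p.2.2)) p.1 = fderiv ℝ F p (ee 0) :=
  (HasFDerivAt.comp_hasDerivAt (f := fun t : ℝ => ((t, p.2.1, p.2.2) : E3)) p.1
    (l := F) h.hasFDerivAt (line1 p)).deriv

lemma dl2 {F : E3 → X} {p : E3} (h : DifferentiableAt ℝ F p) :
    deriv (fun t => F (p.1, t, p.2.2)) p.2.1 = fderiv ℝ F p (ee 1) :=
  (HasFDerivAt.comp_hasDerivAt (f := fun t : ℝ => ((p.1, t, p.2.2) : E3)) p.2.1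
    (l := F) h.hasFDerivAt (line2 p)).deriv

lemma dl3 {F : E3 → X} {p : E3} (h : DifferentiableAt ℝ F p) :
    deriv (fun t => F (p.1, p.2.1, t)) p.2.2 = fderiv ℝ F p (ee 2) :=
  (HasFDerivAt.comp_hasDerivAt (f := fun t : ℝ => ((p.1, p.2.1, t) : E3)) p.2.2
    (l := F) h.hasFDerivAt (line3 p)).deriv
end

lemma r1 {F : E3 → ℝ} {p : E3} (h : DifferentiableAt ℝ F p) : rpd1 F p = pd 0 F p := dl1 h
lemma r2 {F : E3 → ℝ} {p : E3} (h : DifferentiableAt ℝ F p) : rpd2 F p = pd 1 F p := dl2 h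
lemma r3 {F : E3 → ℝ} {p : E3} (h : DifferentiableAt ℝ F p) : rpd3 F p = pd 2 F p := dl3 h

/-- component functionals -/
noncomputable def kre : ℍ[ℝ] →L[ℝ] ℝ :=
  LinearMap.toContinuousLinearMap
    { toFun := fun a => a.re, map_add' := fun _ _ => rfl, map_smul' := fun _ _ => rfl }
noncomputable def kI : ℍ[ℝ] →L[ℝ] ℝ :=
  LinearMap.toContinuousLinearMap
    { toFun := fun a => a.imI, map_add' := fun _ _ => rfl, map_smul' := fun _ _ => rfl }
noncomputable def kJ : ℍ[ℝ] →L[ℝ] ℝ :=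
  LinearMap.toContinuousLinearMap
    { toFun := fun a => a.imJ, map_add' := fun _ _ => rfl, map_smul' := fun _ _ => rfl }
noncomputable def kK : ℍ[ℝ] →L[ℝ] ℝ :=
  LinearMap.toContinuousLinearMap
    { toFun := fun a => a.imK, map_add' := fun _ _ => rfl, map_smul' := fun _ _ => rfl }
noncomputable def kco : ℝ →L[ℝ] ℍ[ℝ] :=
  LinearMap.toContinuousLinearMap (Algebra.linearMap ℝ ℍ[ℝ])

lemma kpd (k : ℍ[ℝ] →L[ℝ] ℝ) {W : E3 → ℍ[ℝ]} {p : E3} (h : DifferentiableAt ℝ W p) (i : Fin 3) :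
    k (fderiv ℝ W p (ee i)) = pd i (fun q => k (W q)) p := by
  have := (k.hasFDerivAt (x := W p)).comp p h.hasFDerivAt
  have h2 : HasFDerivAt (fun q => k (W q)) (k.comp (fderiv ℝ W p)) p := this
  simp [pd, h2.fderiv]

lemma fco {f : E3 → ℝ} {p : E3} (h : DifferentiableAt ℝ f p) :
    HasFDerivAt (fun q => ((f q : ℝ) : ℍ[ℝ])) (kco.comp (fderiv ℝ f p)) p :=
  (kco.hasFDerivAt (x := f p)).comp p h.hasFDerivAt

/-- The equation in components. -/
lemma vek_comp {f : E3 → ℝ} {W : E3 → ℍ[ℝ]} {p : E3} (hf : DifferentiableAt ℝ f p)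
    (hW : DifferentiableAt ℝ W p)
    (h : Dr W p = (((f p)⁻¹ : ℝ) : ℍ[ℝ]) * Dr (fun q => ((f q : ℝ) : ℍ[ℝ])) p * qconjR (W p)) :
    (-(pd 0 (fun q => (W q).imI) p + pd 1 (fun q => (W q).imJ) p + pd 2 (fun q => (W q).imK) p) =
      (f p)⁻¹ * (pd 0 f p * (W p).imI + pd 1 f p * (W p).imJ + pd 2 f p * (W p).imK)) ∧
    (pd 0 (fun q => (W q).re) p + (pd 1 (fun q => (W q).imK) p - pd 2 (fun q => (W q).imJ) p) =
      (f p)⁻¹ * ((W p).re * pd 0 f p - (pd 1 f p * (W p).imK - pd 2 f p * (W p).imJ))) ∧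
    (pd 1 (fun q => (W q).re) p + (pd 2 (fun q => (W q).imI) p - pd 0 (fun q => (W q).imK) p) =
      (f p)⁻¹ * ((W p).re * pd 1 f p - (pd 2 f p * (W p).imI - pd 0 f p * (W p).imK))) ∧
    (pd 2 (fun q => (W q).re) p + (pd 0 (fun q => (W q).imJ) p - pd 1 (fun q => (W q).imI) p) =
      (f p)⁻¹ * ((W p).re * pd 2 f p - (pd 0 f p * (W p).imJ - pd 1 f p * (W p).imI))) := by
  have a1 : hpd1 W p = fderiv ℝ W p (ee 0) := dl1 hW
  have a2 : hpd2 W p = fderiv ℝ W p (ee 1) := dl2 hW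
  have a3 : hpd3 W p = fderiv ℝ W p (ee 2) := dl3 hW
  have hc := fco hf
  have b1 : hpd1 (fun q => ((f q : ℝ) : ℍ[ℝ])) p = ((pd 0 f p : ℝ) : ℍ[ℝ]) :=
    (dl1 hc.differentiableAt).trans (by rw [hc.fderiv]; rfl)
  have b2 : hpd2 (fun q => ((f q : ℝ) : ℍ[ℝ])) p = ((pd 1 f p : ℝ) : ℍ[ℝ]) :=
    (dl2 hc.differentiableAt).trans (by rw [hc.fderiv]; rfl)
  have b3 : hpd3 (fun q => ((f q : ℝ) : ℍ[ℝ])) p = ((pd 2 f p : ℝ) : ℍ[ℝ]) :=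
    (dl3 hc.differentiableAt).trans (by rw [hc.fderiv]; rfl)
  have c0 : ∀ i, (fderiv ℝ W p (ee i)).re = pd i (fun q => (W q).re) p := kpd kre hW
  have c1 : ∀ i, (fderiv ℝ W p (ee i)).imI = pd i (fun q => (W q).imI) p := kpd kI hW
  have c2 : ∀ i, (fderiv ℝ W p (ee i)).imJ = pd i (fun q => (W q).imJ) p := kpd kJ hW
  have c3 : ∀ i, (fderiv ℝ W p (ee i)).imK = pd i (fun q => (W q).imK) p := kpd kK hW
  rw [Dr, Dr, a1, a2, a3, b1, b2, b3] at h
  have e0 := congrArg (fun a : ℍ[ℝ] => a.re) h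
  have e1 := congrArg (fun a : ℍ[ℝ] => a.imI) h
  have e2 := congrArg (fun a : ℍ[ℝ] => a.imJ) h
  have e3 := congrArg (fun a : ℍ[ℝ] => a.imK) h
  simp only [Quaternion.re_add, Quaternion.imI_add, Quaternion.imJ_add, Quaternion.imK_add,
    Quaternion.re_mul, Quaternion.imI_mul, Quaternion.imJ_mul, Quaternion.imK_mul,
    Quaternion.re_coe, Quaternion.imI_coe, Quaternion.imJ_coe, Quaternion.imK_coe,
    c0, c1, c2, c3] at e0 e1 e2 e3
  simp only [qi, qj, qk, qconjR] at e0 e1 e2 e3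
  refine ⟨?_, ?_, ?_, ?_⟩
  · linear_combination e0
  · linear_combination e1
  · linear_combination e2
  · linear_combination e3

lemma pd_inv {i : Fin 3} {f : E3 → ℝ} {p : E3} (hf : DifferentiableAt ℝ f p) (h0 : f p ≠ 0) :
    pd i (fun q => (f q)⁻¹) p = -pd i f p / f p ^ 2 := by
  have h := (hasDerivAt_inv h0).comp_hasFDerivAt p hf.hasFDerivAt
  have h' : HasFDerivAt (fun q => (f q)⁻¹) (-(f p ^ 2)⁻¹ • fderiv ℝ f p) p := h
  rw [pd, h'.fderiv]
  simp [pd]; ring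

lemma pd_neg {i : Fin 3} {F : E3 → ℝ} {x : E3} : pd i (fun y => -F y) x = -pd i F x := by
  simp [pd, fderiv_fun_neg]

lemma pd_contDiffAt {i : Fin 3} {F : E3 → ℝ} {x : E3} (h : ContDiffAt ℝ 2 F x) :
    DifferentiableAt ℝ (pd i F) x := by
  have := (h.fderiv_right (m := 1) (by norm_num)).differentiableAt (by norm_num)
  exact this.clm_apply (differentiableAt_const _)

/-- Everything for one point, in terms of `pd`. -/
lemma assemble {G : Set E3} (hG : IsOpen G) {f : E3 → ℝ} (hf : ContDiffOn ℝ 2 f G)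
    (hfpos : ∀ p ∈ G, 0 < f p) {w : E3 → ℝ} {v : Fin 3 → E3 → ℝ}
    (hw : ContDiffOn ℝ 1 w G) (hv : ∀ j, ContDiffOn ℝ 1 (v j) G)
    (hdiv : ∀ p ∈ G, -(pd 0 (v 0) p + pd 1 (v 1) p + pd 2 (v 2) p) =
      (f p)⁻¹ * (pd 0 f p * v 0 p + pd 1 f p * v 1 p + pd 2 f p * v 2 p))
    (h0 : ∀ p ∈ G, pd 0 w p + (pd 1 (v 2) p - pd 2 (v 1) p) =
      (f p)⁻¹ * (w p * pd 0 f p - (pd 1 f p * v 2 p - pd 2 f p * v 1 p)))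
    (h1 : ∀ p ∈ G, pd 1 w p + (pd 2 (v 0) p - pd 0 (v 2) p) =
      (f p)⁻¹ * (w p * pd 1 f p - (pd 2 f p * v 0 p - pd 0 f p * v 2 p)))
    (h2 : ∀ p ∈ G, pd 2 w p + (pd 0 (v 1) p - pd 1 (v 0) p) =
      (f p)⁻¹ * (w p * pd 2 f p - (pd 0 f p * v 1 p - pd 1 f p * v 0 p)))
    {p : E3} (hp : p ∈ G) :
    vdiv (fun q => f q * v 0 q) (fun q => f q * v 1 q) (fun q => f q * v 2 q) p = 0 ∧
    (∀ q ∈ G, curl1 (fun q => f q * v 0 q) (fun q => f q * v 1 q) (fun q => f q * v 2 q) q =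
      - (f q ^ 2 * pd 0 (fun q => (f q)⁻¹ * w q) q)) ∧
    (∀ q ∈ G, curl2 (fun q => f q * v 0 q) (fun q => f q * v 1 q) (fun q => f q * v 2 q) q =
      - (f q ^ 2 * pd 1 (fun q => (f q)⁻¹ * w q) q)) ∧
    (∀ q ∈ G, curl3 (fun q => f q * v 0 q) (fun q => f q * v 1 q) (fun q => f q * v 2 q) q =
      - (f q ^ 2 * pd 2 (fun q => (f q)⁻¹ * w q) q)) ∧
    ContDiffAt ℝ 2 (fun q => (f q)⁻¹ * w q) p ∧
    ∑ j, pd j (fun x => f x ^ 2 * pd j (fun q => (f q)⁻¹ * w q) x) p = 0 := by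
  have df : ∀ q ∈ G, DifferentiableAt ℝ f q := fun q hq =>
    (hf.contDiffAt (hG.mem_nhds hq)).differentiableAt (by simp)
  have dw : ∀ q ∈ G, DifferentiableAt ℝ w q := fun q hq =>
    (hw.contDiffAt (hG.mem_nhds hq)).differentiableAt (by simp)
  have dv : ∀ j, ∀ q ∈ G, DifferentiableAt ℝ (v j) q := fun j q hq =>
    ((hv j).contDiffAt (hG.mem_nhds hq)).differentiableAt (by simp)
  have di : ∀ q ∈ G, DifferentiableAt ℝ (fun q => (f q)⁻¹) q := fun q hq =>
    (df q hq).inv (hfpos q hq).ne'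
  have dfv : ∀ j, ∀ q ∈ G, DifferentiableAt ℝ (fun q => f q * v j q) q := fun j q hq =>
    (df q hq).mul (dv j q hq)
  have pfv : ∀ i j, ∀ q ∈ G, pd i (fun q => f q * v j q) q = pd i f q * v j q + f q * pd i (v j) q :=
    fun i j q hq => pd_mul (df q hq) (dv j q hq)
  have pu : ∀ i, ∀ q ∈ G, pd i (fun q => (f q)⁻¹ * w q) q =
      -pd i f q / f q ^ 2 * w q + (f q)⁻¹ * pd i w q := fun i q hq => by
    rw [pd_mul (di q hq) (dw q hq), pd_inv (df q hq) (hfpos q hq).ne']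
  have k0 : ∀ q ∈ G, curl1 (fun q => f q * v 0 q) (fun q => f q * v 1 q) (fun q => f q * v 2 q) q =
      - (f q ^ 2 * pd 0 (fun q => (f q)⁻¹ * w q) q) := fun q hq => by
    have hq0 := (hfpos q hq).ne'
    rw [curl1, r2 (dfv 2 q hq), r3 (dfv 1 q hq), pfv _ _ q hq, pfv _ _ q hq, pu _ q hq]
    have := h0 q hq
    field_simp at this ⊢
    linear_combination this
  have k1 : ∀ q ∈ G, curl2 (fun q => f q * v 0 q) (fun q => f q * v 1 q) (fun q => f q * v 2 q) q =
      - (f q ^ 2 * pd 1 (fun q => (f q)⁻¹ * w q) q) := fun q hq => by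
    have hq0 := (hfpos q hq).ne'
    rw [curl2, r3 (dfv 0 q hq), r1 (dfv 2 q hq), pfv _ _ q hq, pfv _ _ q hq, pu _ q hq]
    have := h1 q hq
    field_simp at this ⊢
    linear_combination this
  have k2 : ∀ q ∈ G, curl3 (fun q => f q * v 0 q) (fun q => f q * v 1 q) (fun q => f q * v 2 q) q =
      - (f q ^ 2 * pd 2 (fun q => (f q)⁻¹ * w q) q) := fun q hq => by
    have hq0 := (hfpos q hq).ne'
    rw [curl3, r1 (dfv 1 q hq), r2 (dfv 0 q hq), pfv _ _ q hq, pfv _ _ q hq, pu _ q hq]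
    have := h2 q hq
    field_simp at this ⊢
    linear_combination this
  refine ⟨?_, k0, k1, k2, ?_⟩
  · have hq0 := (hfpos p hp).ne'
    rw [vdiv, r1 (dfv 0 p hp), r2 (dfv 1 p hp), r3 (dfv 2 p hp), pfv _ _ p hp, pfv _ _ p hp,
      pfv _ _ p hp]
    have := hdiv p hp
    field_simp at this
    linear_combination -this
  · refine main_local hG (A := fun j q => -(f q * v j q)) hf hfpos ?_ ?_ ?_ hp
    · exact ((hf.of_le (by norm_num)).inv fun x hx => (hfpos x hx).ne').mul hw
    · exact fun j => ((hf.of_le (by norm_num)).mul (hv j)).neg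
    · intro q hq j
      have l0 := k0 q hq
      have l1 := k1 q hq
      have l2 := k2 q hq
      rw [curl1, r2 (dfv 2 q hq), r3 (dfv 1 q hq)] at l0
      rw [curl2, r3 (dfv 0 q hq), r1 (dfv 2 q hq)] at l1
      rw [curl3, r1 (dfv 1 q hq), r2 (dfv 0 q hq)] at l2
      fin_cases j
      · simp only [crl, Fin.zero_eta, Matrix.cons_val, pd_neg]
        linear_combination l0
      · simp only [crl, Fin.mk_one, Matrix.cons_val, pd_neg]
        linear_combination l1
      · simp only [crl, Fin.reduceFinMk, Matrix.cons_val, pd_neg]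
        linear_combination l2

lemma rr {F H : E3 → ℝ} {p : E3} (h : F =ᶠ[𝓝 p] H) (hH : DifferentiableAt ℝ H p) :
    rpd1 F p = pd 0 H p ∧ rpd2 F p = pd 1 H p ∧ rpd3 F p = pd 2 H p := by
  have hF := hH.congr_of_eventuallyEq h
  rw [r1 hF, r2 hF, r3 hF, pd_congr h, pd_congr h, pd_congr h]
  exact ⟨rfl, rfl, rfl⟩

end QV

end

/-- Structure of solutions of the 3D main quaternionic Vekua-type equation
`DW = (Df/f)·W̄`: with `𝐖` the vector part and `W₀` the scalar part of `W`,
(a) `div(f𝐖) = 0`; (b) `f⁻¹ rot(f𝐖) + f grad(f⁻¹W₀) = 0`; and consequently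
(c) `div(f² grad(f⁻¹W₀)) = 0` and (d) `rot(f⁻² rot(f𝐖)) = 0` on `G`. -/
theorem quaternionic_vekua_parts
    (G : Set (ℝ × ℝ × ℝ)) (hG : IsOpen G) (hsc : SimplyConnectedSpace G)
    (f : ℝ × ℝ × ℝ → ℝ) (hf : ContDiffOn ℝ 2 f G) (hfpos : ∀ p ∈ G, 0 < f p)
    (W : ℝ × ℝ × ℝ → ℍ[ℝ]) (hW : ContDiffOn ℝ 1 W G)
    (hVek : ∀ p ∈ G,
      Dr W p =
        (((f p)⁻¹ : ℝ) : ℍ[ℝ]) * Dr (fun q => ((f q : ℝ) : ℍ[ℝ])) p * qconjR (W p)) :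
    ∀ p ∈ G,
      (vdiv (fun q => f q * (W q).imI) (fun q => f q * (W q).imJ)
          (fun q => f q * (W q).imK) p = 0)
      ∧
      ((f p)⁻¹ * curl1 (fun q => f q * (W q).imI) (fun q => f q * (W q).imJ)
            (fun q => f q * (W q).imK) p
          + f p * rpd1 (fun q => (f q)⁻¹ * (W q).re) p = 0 ∧
        (f p)⁻¹ * curl2 (fun q => f q * (W q).imI) (fun q => f q * (W q).imJ)
            (fun q => f q * (W q).imK) p
          + f p * rpd2 (fun q => (f q)⁻¹ * (W q).re) p = 0 ∧
        (f p)⁻¹ * curl3 (fun q => f q * (W q).imI) (fun q => f q * (W q).imJ)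
            (fun q => f q * (W q).imK) p
          + f p * rpd3 (fun q => (f q)⁻¹ * (W q).re) p = 0)
      ∧
      (vdiv (fun q => f q ^ 2 * rpd1 (fun w => (f w)⁻¹ * (W w).re) q)
          (fun q => f q ^ 2 * rpd2 (fun w => (f w)⁻¹ * (W w).re) q)
          (fun q => f q ^ 2 * rpd3 (fun w => (f w)⁻¹ * (W w).re) q) p = 0)
      ∧
      (curl1 (fun q => (f q ^ 2)⁻¹ * curl1 (fun w => f w * (W w).imI)
              (fun w => f w * (W w).imJ) (fun w => f w * (W w).imK) q)
          (fun q => (f q ^ 2)⁻¹ * curl2 (fun w => f w * (W w).imI)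
              (fun w => f w * (W w).imJ) (fun w => f w * (W w).imK) q)
          (fun q => (f q ^ 2)⁻¹ * curl3 (fun w => f w * (W w).imI)
              (fun w => f w * (W w).imJ) (fun w => f w * (W w).imK) q) p = 0 ∧
        curl2 (fun q => (f q ^ 2)⁻¹ * curl1 (fun w => f w * (W w).imI)
              (fun w => f w * (W w).imJ) (fun w => f w * (W w).imK) q)
          (fun q => (f q ^ 2)⁻¹ * curl2 (fun w => f w * (W w).imI)
              (fun w => f w * (W w).imJ) (fun w => f w * (W w).imK) q)
          (fun q => (f q ^ 2)⁻¹ * curl3 (fun w => f w * (W w).imI)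
              (fun w => f w * (W w).imJ) (fun w => f w * (W w).imK) q) p = 0 ∧
        curl3 (fun q => (f q ^ 2)⁻¹ * curl1 (fun w => f w * (W w).imI)
              (fun w => f w * (W w).imJ) (fun w => f w * (W w).imK) q)
          (fun q => (f q ^ 2)⁻¹ * curl2 (fun w => f w * (W w).imI)
              (fun w => f w * (W w).imJ) (fun w => f w * (W w).imK) q)
          (fun q => (f q ^ 2)⁻¹ * curl3 (fun w => f w * (W w).imI)
              (fun w => f w * (W w).imJ) (fun w => f w * (W w).imK) q) p = 0) := by
  intro p hp
  have cW : ∀ k : ℍ[ℝ] →L[ℝ] ℝ, ContDiffOn ℝ 1 (fun q => k (W q)) G := fun k =>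
    k.contDiff.comp_contDiffOn hW
  have dW : ∀ q ∈ G, DifferentiableAt ℝ W q := fun q hq =>
    (hW.contDiffAt (hG.mem_nhds hq)).differentiableAt (by simp)
  have df : ∀ q ∈ G, DifferentiableAt ℝ f q := fun q hq =>
    (hf.contDiffAt (hG.mem_nhds hq)).differentiableAt (by simp)
  have hcomp := fun q hq => QV.vek_comp (df q hq) (dW q hq) (hVek q hq)
  have hw : ContDiffOn ℝ 1 (fun q => (W q).re) G := cW QV.kre
  obtain ⟨ha, k0, k1, k2, hC, hd⟩ := QV.assemble hG hf hfpos (w := fun q => (W q).re)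
    (v := ![fun q => (W q).imI, fun q => (W q).imJ, fun q => (W q).imK]) hw
    (by
      intro j
      fin_cases j
      · exact cW QV.kI
      · exact cW QV.kJ
      · exact cW QV.kK)
    (fun q hq => (hcomp q hq).1) (fun q hq => (hcomp q hq).2.1)
    (fun q hq => (hcomp q hq).2.2.1) (fun q hq => (hcomp q hq).2.2.2) hp
  simp only [Matrix.cons_val_zero, Matrix.cons_val_one, Matrix.cons_val] at ha k0 k1 k2
  have hu : ∀ q ∈ G, DifferentiableAt ℝ (fun q => (f q)⁻¹ * (W q).re) q := fun q hq =>
    ((df q hq).inv (hfpos q hq).ne').mul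
      ((hw.contDiffAt (hG.mem_nhds hq)).differentiableAt (by simp))
  have hfp := (hfpos p hp).ne'
  have hev : ∀ᶠ q in nhds p, q ∈ G := hG.mem_nhds hp
  have hpd : ∀ i, DifferentiableAt ℝ (QV.pd i (fun q => (f q)⁻¹ * (W q).re)) p := fun i =>
    QV.pd_contDiffAt hC
  have hF : ∀ i, DifferentiableAt ℝ (fun q => f q ^ 2 * QV.pd i (fun q => (f q)⁻¹ * (W q).re) q) p :=
    fun i => ((df p hp).pow 2).mul (hpd i)
  refine ⟨ha, ⟨?_, ?_, ?_⟩, ?_, ?_⟩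
  · rw [k0 p hp, QV.r1 (hu p hp)]; field_simp; ring
  · rw [k1 p hp, QV.r2 (hu p hp)]; field_simp; ring
  · rw [k2 p hp, QV.r3 (hu p hp)]; field_simp; ring
  · rw [Fin.sum_univ_three] at hd
    rw [vdiv, (QV.rr (hev.mono fun q hq => by rw [QV.r1 (hu q hq)]) (hF 0)).1,
      (QV.rr (hev.mono fun q hq => by rw [QV.r2 (hu q hq)]) (hF 1)).2.1,
      (QV.rr (hev.mono fun q hq => by rw [QV.r3 (hu q hq)]) (hF 2)).2.2]
    exact hd
  · have e : ∀ q ∈ G, ∀ a : ℝ, (f q ^ 2)⁻¹ * -(f q ^ 2 * a) = -a := fun q hq a => by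
      have := (hfpos q hq).ne'
      field_simp
    have g0 := QV.rr (F := fun q => (f q ^ 2)⁻¹ * curl1 (fun w => f w * (W w).imI)
        (fun w => f w * (W w).imJ) (fun w => f w * (W w).imK) q)
      (hev.mono fun q hq => (congrArg _ (k0 q hq)).trans (e q hq _)) (hpd 0).fun_neg
    have g1 := QV.rr (F := fun q => (f q ^ 2)⁻¹ * curl2 (fun w => f w * (W w).imI)
        (fun w => f w * (W w).imJ) (fun w => f w * (W w).imK) q)
      (hev.mono fun q hq => (congrArg _ (k1 q hq)).trans (e q hq _)) (hpd 1).fun_neg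
    have g2 := QV.rr (F := fun q => (f q ^ 2)⁻¹ * curl3 (fun w => f w * (W w).imI)
        (fun w => f w * (W w).imJ) (fun w => f w * (W w).imK) q)
      (hev.mono fun q hq => (congrArg _ (k2 q hq)).trans (e q hq _)) (hpd 2).fun_neg
    refine ⟨?_, ?_, ?_⟩
    · rw [curl1, g2.2.1, g1.2.2, QV.pd_neg, QV.pd_neg, QV.pd_symm hC, sub_self]
    · rw [curl2, g0.2.2, g2.1, QV.pd_neg, QV.pd_neg, QV.pd_symm hC, sub_self]
    · rw [curl3, g1.1, g0.2.1, QV.pd_neg, QV.pd_neg, QV.pd_symm hC, sub_self]
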